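/- Let d ≥ 5, b > 1, and let C be a clustering, with at least two clusters, of an n-element configuration in Z^d such that: every cluster has at most 3 elements; sep(C)^{0.1} ≥ (log sep(C))^{d−2}; and diam(C^j) ≤ b·log dist(C^j, C^{≠j}) for every j. There is a number c = c(d) > 0 such that for every cluster index i, every x ∈ C^i and every y ∈ ∂(C^i∖{x}) with p_{π(C)}(x,y) > 0, one has P_x(S_{τ−1} = y | τ < ∞) ≥ (1 − c·n·b^{d−2}·sep(C)^{2.1−d})·P_x(S_{τ'−1} = y | τ' < ∞), where τ = τ_{π(C)∖{x}} and τ' = τ_{C^i∖{x}}. -/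

import Mathlib

open MeasureTheory

namespace HATFormal

/-- Points of the lattice `ℤ^d`. -/
abbrev Pt (d : ℕ) := Fin d → ℤ

/-- The `2d` unit steps of the simple random walk on `ℤ^d`. -/
def Dir (d : ℕ) : Set (Pt d) :=
  {s | ∃ i : Fin d, s = Pi.single i 1 ∨ s = Pi.single i (-1)}

/-- The position, after `t` steps, of the walk started at `x` with steps `s`. -/
def wpos (d : ℕ) (x : Pt d) {T : ℕ} (s : Fin T → Pt d) (t : ℕ) : Pt d :=
  x + ∑ i ∈ Finset.univ.filter (fun i : Fin T => (i : ℕ) < t), s i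

/-- The probability of an event `P` of the first `T` steps of simple random walk on `ℤ^d`. -/
noncomputable def prob (d T : ℕ) (P : (Fin T → Pt d) → Prop) : ℝ :=
  (Nat.card {s : Fin T → Pt d // (∀ i, s i ∈ Dir d) ∧ P s} : ℝ) / ((2 * d : ℕ) : ℝ) ^ T

open Classical in
/-- `esc d A x = P_x(τ_A = ∞)` if `x ∈ A`, and `0` otherwise. -/
noncomputable def esc (d : ℕ) (A : Set (Pt d)) (x : Pt d) : ℝ :=
  if x ∈ A then ⨅ T : ℕ, prob d T (fun s => ∀ t, 1 ≤ t → t ≤ T → wpos d x s t ∉ A) else 0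

/-- The capacity of `A`. -/
noncomputable def capa (d : ℕ) (A : Set (Pt d)) : ℝ := ∑' x : A, esc d A (x : Pt d)

/-- The harmonic measure `H_A(x) = esc_A(x) / cap_A`. -/
noncomputable def harm (d : ℕ) (A : Set (Pt d)) (x : Pt d) : ℝ := esc d A x / capa d A

/-- `P_x(τ_W < ∞)`. -/
noncomputable def retProb (d : ℕ) (W : Set (Pt d)) (x : Pt d) : ℝ :=
  ∑' t : ℕ, prob d t (fun s => 1 ≤ t ∧ wpos d x s t ∈ W ∧
    ∀ u, 1 ≤ u → u < t → wpos d x s u ∉ W)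

/-- `P_x(τ_W < ∞ and S_{τ_W − 1} = y)`. -/
noncomputable def hitFrom (d : ℕ) (W : Set (Pt d)) (x y : Pt d) : ℝ :=
  ∑' t : ℕ, prob d t (fun s => 1 ≤ t ∧ wpos d x s t ∈ W ∧ wpos d x s (t - 1) = y ∧
    ∀ u, 1 ≤ u → u < t → wpos d x s u ∉ W)

/-- `P_x(τ_W < ∞ and S_{τ_W} ∈ T)`. -/
noncomputable def firstHitIn (d : ℕ) (W T : Set (Pt d)) (x : Pt d) : ℝ :=
  ∑' t : ℕ, prob d t (fun s => 1 ≤ t ∧ wpos d x s t ∈ W ∧ wpos d x s t ∈ T ∧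
    ∀ u, 1 ≤ u → u < t → wpos d x s u ∉ W)

/-- `P_x(S_{τ_W − 1} = y ∣ τ_W < ∞)`. -/
noncomputable def transP (d : ℕ) (W : Set (Pt d)) (x y : Pt d) : ℝ :=
  hitFrom d W x y / retProb d W x

/-- The Green's function of simple random walk on `ℤ^d`. -/
noncomputable def green (d : ℕ) (x : Pt d) : ℝ :=
  ∑' t : ℕ, prob d t (fun s => wpos d x s t = 0)

/-- Configurations: finite subsets of `ℤ^d`. -/
abbrev Conf (d : ℕ) := Finset (Pt d)

/-- `p_U(x, y)`, the probability that HAT activates at `x` and transports to `y`. -/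
noncomputable def pHAT (d : ℕ) (U : Conf d) (x y : Pt d) : ℝ :=
  harm d (↑U) x * transP d ((↑U : Set (Pt d)) \ {x}) x y

open Classical in
/-- The transition probabilities of HAT. -/
noncomputable def hatProb (d : ℕ) (U V : Conf d) : ℝ :=
  if V = U then ∑' z : Pt d, pHAT d U z z
  else ∑' x : Pt d, ∑' y : Pt d,
    if x ∈ U ∧ x ≠ y ∧ V = insert y (U.erase x) then pHAT d U x y else 0

instance (d : ℕ) : MeasurableSpace (Conf d) := ⊤

/-- `μ` is the law of HAT started from `U`. -/
def IsHATLaw (d : ℕ) (U : Conf d) (μ : Measure (ℕ → Conf d)) : Prop :=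
  IsProbabilityMeasure μ ∧
  ∀ (t : ℕ) (u : ℕ → Conf d),
    μ {ω | ∀ s ≤ t, ω s = u s} =
      (if u 0 = U then 1 else 0) *
        ∏ s ∈ Finset.range t, ENNReal.ofReal (hatProb d (u s) (u (s + 1)))

/-- A signed permutation plus translation of `ℤ^d`. -/
def SymImage (d : ℕ) (σ : Equiv.Perm (Fin d)) (ε : Fin d → ℤ) (v : Pt d) (x : Pt d) : Pt d :=
  fun i => v i + ε i * x (σ i)

/-- `SymEq d U V` holds when `V = gU` for a symmetry `g` of `ℤ^d`. -/
def SymEq (d : ℕ) (U V : Conf d) : Prop :=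
  ∃ (σ : Equiv.Perm (Fin d)) (ε : Fin d → ℤ) (v : Pt d),
    (∀ i, ε i = 1 ∨ ε i = -1) ∧ V = U.image (SymImage d σ ε v)

/-- Euclidean distance on `ℤ^d`. -/
noncomputable def dist0 (d : ℕ) (x y : Pt d) : ℝ :=
  Real.sqrt (∑ i, ((x i : ℝ) - (y i : ℝ)) ^ 2)

/-- Euclidean distance between finite subsets of `ℤ^d`. -/
noncomputable def setDist (d : ℕ) (A B : Finset (Pt d)) : ℝ :=
  sInf {r : ℝ | ∃ x ∈ A, ∃ y ∈ B, r = dist0 d x y}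

/-- Euclidean diameter of a finite subset of `ℤ^d`. -/
noncomputable def diam0 (d : ℕ) (A : Finset (Pt d)) : ℝ :=
  sSup {r : ℝ | ∃ x ∈ A, ∃ y ∈ A, r = dist0 d x y}

/-- Lattice (nearest-neighbor) adjacency in `ℤ^d`. -/
def latAdj (d : ℕ) (x y : Pt d) : Prop := (∑ i, (x i - y i).natAbs) = 1

/-- Exterior lattice boundary of a set. -/
def bdry (d : ℕ) (A : Set (Pt d)) : Set (Pt d) := {z | z ∉ A ∧ ∃ w ∈ A, latAdj d z w}

/-- Non-isolated configurations: some exposed element has a lattice neighbor in the set. -/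
def NonIso (d : ℕ) (U : Conf d) : Prop :=
  ∃ x ∈ U, 0 < esc d (↑U) x ∧ ∃ y ∈ U, latAdj d x y

/-- `C` is a clustering (ordered partition into nonempty clusters) of `U`. -/
def IsClusteringOf (d : ℕ) {k : ℕ} (C : Fin k → Finset (Pt d)) (U : Finset (Pt d)) : Prop :=
  (∀ i, (C i).Nonempty) ∧ (∀ i j, i ≠ j → Disjoint (C i) (C j)) ∧
    Finset.univ.biUnion C = U

/-- `C^{≠ i}`, the union of the clusters other than `i`. -/
def others (d : ℕ) {k : ℕ} (C : Fin k → Finset (Pt d)) (i : Fin k) : Finset (Pt d) :=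
  Finset.univ.biUnion fun j => if j = i then ∅ else C j

/-- The separation of a clustering. -/
noncomputable def sep (d : ℕ) {k : ℕ} (C : Fin k → Finset (Pt d)) : ℝ :=
  ⨅ i, setDist d (C i) (others d C i)

/-- `(a, b)` separated dimer-or-trimer (DOT) clusterings. -/
def IsDOT (d : ℕ) {k : ℕ} (C : Fin k → Finset (Pt d)) (a b : ℝ) : Prop :=
  (∀ i, (C i).card = 2 ∨ (C i).card = 3) ∧ a ≤ sep d C ∧
    ∀ i, diam0 d (C i) ≤ b * Real.log (setDist d (C i) (others d C i))

/-- Clusterings with an unspecified number of clusters. -/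
abbrev ClusteringS (d : ℕ) := Σ k : ℕ, Fin k → Finset (Pt d)

/-- `π(C)`, the union of the clusters of `C`. -/
def confOf (d : ℕ) (C : ClusteringS d) : Conf d := Finset.univ.biUnion C.2

/-- `C ∈ 𝒞(U, a, b)`. -/
def InC (d : ℕ) (U : Conf d) (a b : ℝ) (C : ClusteringS d) : Prop :=
  IsClusteringOf d C.2 U ∧ IsDOT d C.2 a b

/-- `U ∈ 𝒰_{d,n}(a, b)`. -/
def InU (d n : ℕ) (a b : ℝ) (U : Conf d) : Prop :=
  U.card = n ∧ ∃ C : ClusteringS d, InC d U a b C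

/-- `C` is a clustering of an `n`-element configuration. -/
def IsClusteringConf (d n : ℕ) (C : ClusteringS d) : Prop :=
  (∀ i, (C.2 i).Nonempty) ∧ (∀ i j, i ≠ j → Disjoint (C.2 i) (C.2 j)) ∧
    (confOf d C).card = n

open Classical in
/-- One step of the natural clustering. -/
noncomputable def clustStep (d : ℕ) (Ut Ut1 : Conf d) (C : ClusteringS d) : ClusteringS d :=
  if Ut1 = Ut then C
  else if h : ∃ p : Pt d × Pt d × Fin C.1,
      Ut \ Ut1 = {p.1} ∧ Ut1 \ Ut = {p.2.1} ∧ p.1 ∈ C.2 p.2.2 then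
    ⟨C.1, Function.update C.2 h.choose.2.2
      (insert h.choose.2.1 ((C.2 h.choose.2.2).erase h.choose.1))⟩
  else ⟨1, fun _ => Ut1⟩

/-- The natural clustering of the trajectory `ω` with initial clustering `C0`. -/
noncomputable def natClust (d : ℕ) (ω : ℕ → Conf d) (C0 : ClusteringS d) : ℕ → ClusteringS d
  | 0 => C0
  | t + 1 => clustStep d (ω t) (ω (t + 1)) (natClust d ω C0 t)

/-- `a_s = s^{1/2 − n^{−100}} + 100 n`. -/
noncomputable def aSep (n s : ℕ) : ℝ :=
  (s : ℝ) ^ ((1 : ℝ) / 2 - (n : ℝ) ^ (-(100 : ℝ))) + 100 * n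

/-- `C^{i, x, y}`: remove `x` from cluster `i` of `C` and add `y` to that cluster. -/
def updC (d : ℕ) (C : ClusteringS d) (i : Fin C.1) (x y : Pt d) : ClusteringS d :=
  ⟨C.1, Function.update C.2 i (insert y ((C.2 i).erase x))⟩

open Classical in
/-- The transition probabilities of the lifting of HAT to clusterings. -/
noncomputable def liftProb (d : ℕ) (E0 E1 : ClusteringS d) : ℝ :=
  ∑' x : Pt d, ∑' y : Pt d,
    if ∃ i : Fin E0.1, x ∈ E0.2 i ∧ E1 = updC d E0 i x y
    then pHAT d (confOf d E0) x y else 0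

/-- The capacity of a clustering: the sum of the capacities of its clusters. -/
noncomputable def capS (d : ℕ) (C : ClusteringS d) : ℝ := ∑ i, capa d (↑(C.2 i))

/-- `H_C(i, x) = esc_{C^i}(x) / cap_C`. -/
noncomputable def harmS (d : ℕ) (C : ClusteringS d) (i : Fin C.1) (x : Pt d) : ℝ :=
  esc d (↑(C.2 i)) x / capS d C

/-- `q_C(i, x, y)`. -/
noncomputable def qIHAT (d : ℕ) (C : ClusteringS d) (i : Fin C.1) (x y : Pt d) : ℝ :=
  harmS d C i x * transP d ((↑(C.2 i) : Set (Pt d)) \ {x}) x y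

open Classical in
/-- The transition probabilities of intracluster HAT (IHAT). -/
noncomputable def ihatProb (d : ℕ) (D E : ClusteringS d) : ℝ :=
  ∑' x : Pt d, ∑' y : Pt d, ∑ i : Fin D.1,
    if x ∈ D.2 i ∧ E = updC d D i x y then qIHAT d D i x y else 0

instance (d : ℕ) : MeasurableSpace (ClusteringS d) := ⊤

open Classical in
/-- `μ` is the law of the lifted HAT chain started from `E0`. -/
def IsLiftLaw (d : ℕ) (E0 : ClusteringS d) (μ : Measure (ℕ → ClusteringS d)) : Prop :=
  IsProbabilityMeasure μ ∧
  ∀ (t : ℕ) (u : ℕ → ClusteringS d),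
    μ {ω | ∀ s ≤ t, ω s = u s} =
      (if u 0 = E0 then 1 else 0) *
        ∏ s ∈ Finset.range t, ENNReal.ofReal (liftProb d (u s) (u (s + 1)))

open Classical in
/-- `μ` is the law of intracluster HAT started from `D0`. -/
def IsIHATLaw (d : ℕ) (D0 : ClusteringS d) (μ : Measure (ℕ → ClusteringS d)) : Prop :=
  IsProbabilityMeasure μ ∧
  ∀ (t : ℕ) (u : ℕ → ClusteringS d),
    μ {ω | ∀ s ≤ t, ω s = u s} =
      (if u 0 = D0 then 1 else 0) *
        ∏ s ∈ Finset.range t, ENNReal.ofReal (ihatProb d (u s) (u (s + 1)))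

/-- `Pairs(E0, E1)`. -/
def Pairs (d : ℕ) (E0 E1 : ClusteringS d) : Set (Pt d × Pt d) :=
  {p | 0 < pHAT d (confOf d E0) p.1 p.2 ∧
    ∃ i : Fin E0.1, p.1 ∈ E0.2 i ∧ E1 = updC d E0 i p.1 p.2}

/-- `Triples(E0, E1)`. -/
def Triples (d : ℕ) (E0 E1 : ClusteringS d) : Set (Fin E0.1 × Pt d × Pt d) :=
  {q | 0 < qIHAT d E0 q.1 q.2.1 q.2.2 ∧ E1 = updC d E0 q.1 q.2.1 q.2.2}

/-- The first standard basis vector of `ℤ^d`. -/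
def e1v (d : ℕ) : Pt d := fun i => if (i : ℕ) = 0 then 1 else 0

/-- Reference dimers and trimers. -/
def Ref (d : ℕ) : Set (Finset (Pt d)) :=
  {A | ∃ x : Pt d, A = {x, x + e1v d} ∨ A = {x, x + e1v d, x + e1v d + e1v d}}

/-- *-adjacency in `ℤ^d`: distinct points differing by at most one in each coordinate. -/
def starAdj (d : ℕ) (x y : Pt d) : Prop := x ≠ y ∧ ∀ i, (x i - y i).natAbs ≤ 1

/-- The *-visible boundary of `A`. -/
def visBdry (d : ℕ) (A : Finset (Pt d)) : Set (Pt d) :=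
  {x | (∃ y ∈ A, starAdj d x y) ∧
    ∃ γ : ℕ → Pt d, γ 0 = x ∧ (∀ t, latAdj d (γ t) (γ (t + 1))) ∧
      (∀ t, γ t ∉ A) ∧ ∀ r : ℝ, ∃ t, r < dist0 d (γ t) 0}

/-- `A` is connected in the nearest-neighbor graph of `ℤ^d`. -/
def LatConnected (d : ℕ) (A : Finset (Pt d)) : Prop :=
  ∀ x ∈ A, ∀ y ∈ A, ∃ (L : ℕ) (γ : ℕ → Pt d), γ 0 = x ∧ γ L = y ∧
    (∀ t < L, latAdj d (γ t) (γ (t + 1))) ∧ ∀ t ≤ L, γ t ∈ A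

/-- Strict lexicographic order on `ℤ^d`. -/
def lexLt (d : ℕ) (x y : Pt d) : Prop :=
  ∃ i : Fin d, (∀ j, j < i → x j = y j) ∧ x i < y i

/-- `x` is the lex (least) element of `A`. -/
def IsLex (d : ℕ) (A : Finset (Pt d)) (x : Pt d) : Prop :=
  x ∈ A ∧ ∀ y ∈ A, y ≠ x → lexLt d x y

/-! ### Part 1: from path counting to the transition operator -/

/-- The standard basis vectors. -/
def ev (d : ℕ) (i : Fin d) : Pt d := Pi.single i 1

open Classical in
/-- The transition operator of the walk killed on `W`. -/
noncomputable def Qop (d : ℕ) (W : Set (Pt d)) : (Pt d → ℝ) →ₗ[ℝ] (Pt d → ℝ) where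
  toFun f := fun x => (∑ i, ((if x + ev d i ∈ W then 0 else f (x + ev d i)) +
    (if x - ev d i ∈ W then 0 else f (x - ev d i)))) / (2 * d : ℝ)
  map_add' f g := by
    funext x
    simp only [Pi.add_apply, ← add_div, ← Finset.sum_add_distrib]
    congr 1
    refine Finset.sum_congr rfl fun i _ => ?_
    split_ifs <;> ring
  map_smul' c f := by
    funext x
    simp only [Pi.smul_apply, smul_eq_mul, RingHom.id_apply]
    rw [← mul_div_assoc, Finset.mul_sum]
    congr 1
    refine Finset.sum_congr rfl fun i _ => ?_
    split_ifs <;> ring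

open Classical in
/-- One-step probability to enter `W`. -/
noncomputable def mw (d : ℕ) (W : Set (Pt d)) (x : Pt d) : ℝ :=
  (∑ i, ((if x + ev d i ∈ W then (1 : ℝ) else 0) +
    (if x - ev d i ∈ W then (1 : ℝ) else 0))) / (2 * d : ℝ)

open Classical in
lemma Qop_apply (d : ℕ) (W : Set (Pt d)) (f : Pt d → ℝ) (x : Pt d) :
    Qop d W f x = (∑ i, ((if x + ev d i ∈ W then 0 else f (x + ev d i)) +
    (if x - ev d i ∈ W then 0 else f (x - ev d i)))) / (2 * d : ℝ) := rfl

/-- The set of directions as a finset. -/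
def dirs (d : ℕ) : Finset (Pt d) :=
  Finset.univ.image (fun i => ev d i) ∪ Finset.univ.image (fun i => - ev d i)

lemma ev_inj (d : ℕ) : Function.Injective (ev d) := by
  intro i j h
  by_contra hne
  have := congrFun h i
  simp [ev, hne] at this

lemma mem_dirs (d : ℕ) (s : Pt d) : s ∈ dirs d ↔ s ∈ Dir d := by
  simp only [dirs, Finset.mem_union, Finset.mem_image, Finset.mem_univ, true_and, Dir,
    Set.mem_ofPred_eq, ev]
  constructor
  · rintro (⟨i, rfl⟩ | ⟨i, rfl⟩)
    · exact ⟨i, Or.inl rfl⟩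
    · exact ⟨i, Or.inr (by rw [Pi.single_neg])⟩
  · rintro ⟨i, rfl | rfl⟩
    · exact Or.inl ⟨i, rfl⟩
    · exact Or.inr ⟨i, by rw [Pi.single_neg]⟩

lemma sum_dirs (d : ℕ) (F : Pt d → ℝ) :
    ∑ e ∈ dirs d, F e = ∑ i, (F (ev d i) + F (- ev d i)) := by
  rw [dirs, Finset.sum_union, Finset.sum_image, Finset.sum_image, Finset.sum_add_distrib]
  · intro i _ j _ h
    exact ev_inj d (neg_injective h)
  · intro i _ j _ h
    exact ev_inj d h
  · rw [Finset.disjoint_left]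
    intro s hs hs'
    simp only [Finset.mem_image, Finset.mem_univ, true_and] at hs hs'
    obtain ⟨i, rfl⟩ := hs
    obtain ⟨j, hj⟩ := hs'
    have := congrFun hj i
    simp only [ev, Pi.neg_apply, Pi.single_apply] at this
    split_ifs at this <;> omega

instance finDir (d : ℕ) : Finite (Dir d) :=
  Finite.of_injective (fun s : Dir d => (⟨s.1, (mem_dirs d s.1).2 s.2⟩ : dirs d)) (by
    intro a b h
    exact Subtype.ext (congrArg (fun z : dirs d => z.1) h))

instance finPaths (d T : ℕ) (P : (Fin T → Pt d) → Prop) :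
    Finite {s : Fin T → Pt d // (∀ i, s i ∈ Dir d) ∧ P s} :=
  Finite.of_injective (fun s => (fun i => (⟨s.1 i, s.2.1 i⟩ : Dir d))) (by
    intro a b h
    apply Subtype.ext
    funext i
    exact congrArg Subtype.val (congrFun h i))

/-- Splitting off the first step. -/
def splitEquiv (d T : ℕ) (P : (Fin (T + 1) → Pt d) → Prop) :
    {s : Fin (T + 1) → Pt d // (∀ i, s i ∈ Dir d) ∧ P s} ≃
      Σ e : dirs d, {s : Fin T → Pt d // (∀ i, s i ∈ Dir d) ∧ P (Fin.cons e.1 s)} where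
  toFun s := ⟨⟨s.1 0, (mem_dirs d _).2 (s.2.1 0)⟩, ⟨Fin.tail s.1, fun i => s.2.1 i.succ, by
    have := s.2.2
    rwa [← Fin.cons_self_tail s.1] at this⟩⟩
  invFun p := ⟨Fin.cons p.1.1 p.2.1, by
    intro i
    refine Fin.cases ?_ ?_ i
    · exact (mem_dirs d _).1 p.1.2
    · intro j
      simpa using p.2.2.1 j, p.2.2.2⟩
  left_inv s := by
    apply Subtype.ext
    exact Fin.cons_self_tail s.1
  right_inv p := by
    rcases p with ⟨⟨e, he⟩, ⟨s, hs⟩⟩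
    rfl

lemma prob_succ (d T : ℕ) (P : (Fin (T + 1) → Pt d) → Prop) :
    prob d (T + 1) P = (∑ i, (prob d T (fun s => P (Fin.cons (ev d i) s)) +
      prob d T (fun s => P (Fin.cons (- ev d i) s)))) / (2 * d : ℝ) := by
  have h1 : (Nat.card {s : Fin (T + 1) → Pt d // (∀ i, s i ∈ Dir d) ∧ P s} : ℝ) =
      ∑ e ∈ dirs d,
        (Nat.card {s : Fin T → Pt d // (∀ i, s i ∈ Dir d) ∧ P (Fin.cons e s)} : ℝ) := by
    rw [Nat.card_congr (splitEquiv d T P), Nat.card_sigma]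
    push_cast
    exact Finset.sum_coe_sort (dirs d) (fun e =>
      (Nat.card {s : Fin T → Pt d // (∀ i, s i ∈ Dir d) ∧ P (Fin.cons e s)} : ℝ))
  unfold prob
  rw [h1, sum_dirs, pow_succ]
  simp only [← add_div, ← Finset.sum_div]
  push_cast
  rw [div_div]

lemma wpos_zero (d : ℕ) (x : Pt d) {T : ℕ} (s : Fin T → Pt d) : wpos d x s 0 = x := by
  simp [wpos]

lemma wpos_cons (d : ℕ) (x e : Pt d) {T : ℕ} (s : Fin T → Pt d) (t : ℕ) :
    wpos d x (Fin.cons e s : Fin (T + 1) → Pt d) (t + 1) = wpos d (x + e) s t := by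
  unfold wpos
  rw [Finset.sum_filter, Finset.sum_filter, Fin.sum_univ_succ]
  simp [add_assoc]

lemma prob_false (d T : ℕ) (P : (Fin T → Pt d) → Prop) (h : ∀ s, ¬ P s) : prob d T P = 0 := by
  unfold prob
  have : IsEmpty {s : Fin T → Pt d // (∀ i, s i ∈ Dir d) ∧ P s} := ⟨fun s => h _ s.2.2⟩
  simp

lemma prob_zero_true (d : ℕ) (P : (Fin 0 → Pt d) → Prop) (h : ∀ s, P s) : prob d 0 P = 1 := by
  unfold prob
  have : Nat.card {s : Fin 0 → Pt d // (∀ i, s i ∈ Dir d) ∧ P s} = 1 := by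
    rw [Nat.card_eq_one_iff_unique]
    exact ⟨⟨fun a b => Subtype.ext (Subsingleton.elim _ _)⟩, ⟨⟨Fin.elim0, fun i => i.elim0, h _⟩⟩⟩
  rw [this]; simp

/-- hitting event at time `t`, with a condition `R` on the previous position. -/
noncomputable def hseq (d : ℕ) (W : Set (Pt d)) (R : Pt d → Prop) (t : ℕ) (x : Pt d) : ℝ :=
  prob d t (fun s => 1 ≤ t ∧ wpos d x s t ∈ W ∧ R (wpos d x s (t - 1)) ∧
    ∀ u, 1 ≤ u → u < t → wpos d x s u ∉ W)

open Classical in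
lemma hseq_one (d : ℕ) (W : Set (Pt d)) (R : Pt d → Prop) (x : Pt d) :
    hseq d W R 1 x = if R x then mw d W x else 0 := by
  unfold hseq
  rw [prob_succ]
  have key : ∀ e : Pt d, prob d 0 (fun s => 1 ≤ 1 ∧
      wpos d x (Fin.cons e s : Fin (0 + 1) → Pt d) 1 ∈ W ∧
      R (wpos d x (Fin.cons e s : Fin (0 + 1) → Pt d) (1 - 1)) ∧
      ∀ u, 1 ≤ u → u < 1 → wpos d x (Fin.cons e s : Fin (0 + 1) → Pt d) u ∉ W) =
      if R x then (if x + e ∈ W then 1 else 0) else 0 := by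
    intro e
    have h0 : ∀ s : Fin 0 → Pt d, wpos d x (Fin.cons e s : Fin (0 + 1) → Pt d) 1 = x + e := by
      intro s
      rw [wpos_cons d x e s 0, wpos_zero]
    split_ifs with h1 h2
    · apply prob_zero_true
      intro s
      refine ⟨le_rfl, by rw [h0]; exact h2, by simpa [wpos_zero] using h1, fun u _ _ => by omega⟩
    · apply prob_false
      rintro s ⟨_, h, _⟩
      rw [h0] at h; exact h2 h
    · apply prob_false
      rintro s ⟨_, _, h, _⟩
      simp [wpos_zero] at h; exact h1 h
  simp only [key]
  unfold mw
  split_ifs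
  · simp only [sub_eq_add_neg]
  · simp

lemma hseq_succ (d : ℕ) (W : Set (Pt d)) (R : Pt d → Prop) (t : ℕ) (x : Pt d) :
    hseq d W R (t + 2) x = Qop d W (hseq d W R (t + 1)) x := by
  classical
  rw [Qop_apply]
  conv_lhs => unfold hseq
  rw [prob_succ]
  have key : ∀ e : Pt d, prob d (t + 1) (fun s => 1 ≤ t + 2 ∧
      wpos d x (Fin.cons e s : Fin (t + 1 + 1) → Pt d) (t + 2) ∈ W ∧
      R (wpos d x (Fin.cons e s : Fin (t + 1 + 1) → Pt d) (t + 2 - 1)) ∧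
      ∀ u, 1 ≤ u → u < t + 2 → wpos d x (Fin.cons e s : Fin (t + 1 + 1) → Pt d) u ∉ W) =
      if x + e ∈ W then 0 else hseq d W R (t + 1) (x + e) := by
    intro e
    split_ifs with h1
    · apply prob_false
      rintro s ⟨_, _, _, h⟩
      have := h 1 le_rfl (by omega)
      rw [wpos_cons d x e s 0, wpos_zero] at this
      exact this h1
    · unfold hseq
      congr 1
      funext s
      have h2 : t + 2 - 1 = t + 1 := rfl
      have h3 : t + 1 - 1 = t := rfl
      rw [h2, h3, wpos_cons d x e s (t + 1), wpos_cons d x e s t]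
      apply propext
      constructor
      · rintro ⟨_, a, b, c⟩
        refine ⟨by omega, a, b, fun u hu hut => ?_⟩
        have := c (u + 1) (by omega) (by omega)
        rwa [wpos_cons] at this
      · rintro ⟨_, a, b, c⟩
        refine ⟨by omega, a, b, fun u hu hut => ?_⟩
        obtain ⟨v, rfl⟩ : ∃ v, u = v + 1 := ⟨u - 1, by omega⟩
        rw [wpos_cons]
        rcases Nat.eq_zero_or_pos v with rfl | hv
        · rwa [wpos_zero]
        · exact c v hv (by omega)
  simp only [key, ← sub_eq_add_neg]

open Classical in
lemma hseq_eq (d : ℕ) (W : Set (Pt d)) (R : Pt d → Prop) (t : ℕ) :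
    hseq d W R (t + 1) = (Qop d W ^ t) (fun v => if R v then mw d W v else 0) := by
  induction t with
  | zero => funext x; simpa using hseq_one d W R x
  | succ t ih =>
    funext x
    rw [hseq_succ, pow_succ', ih]
    rfl

/-- The potential of `g` for the walk killed on `W`. -/
noncomputable def pot (d : ℕ) (W : Set (Pt d)) (g : Pt d → ℝ) (x : Pt d) : ℝ :=
  ∑' t : ℕ, (Qop d W ^ t) g x

lemma tsum_shift (f : ℕ → ℝ) (h : f 0 = 0) : ∑' t, f t = ∑' t, f (t + 1) := by
  have hinj : Function.Injective (fun t : ℕ => t + 1) := fun a b h => by simpa using h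
  refine (hinj.tsum_eq (f := f) ?_).symm
  intro t ht
  rcases t with _ | t
  · exact absurd h ht
  · exact ⟨t, rfl⟩

lemma retProb_eq (d : ℕ) (W : Set (Pt d)) (x : Pt d) :
    retProb d W x = pot d W (mw d W) x := by
  have h : ∀ t, prob d t (fun s => 1 ≤ t ∧ wpos d x s t ∈ W ∧
    ∀ u, 1 ≤ u → u < t → wpos d x s u ∉ W) = hseq d W (fun _ => True) t x := by
    intro t; simp [hseq]
  unfold retProb pot
  simp only [h]
  rw [tsum_shift]
  · simp [hseq_eq]
  · exact prob_false _ _ _ (by simp)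

lemma hitFrom_eq (d : ℕ) (W : Set (Pt d)) (x y : Pt d) :
    hitFrom d W x y = mw d W y * pot d W (Pi.single y 1) x := by
  have h : ∀ t, prob d t (fun s => 1 ≤ t ∧ wpos d x s t ∈ W ∧ wpos d x s (t - 1) = y ∧
    ∀ u, 1 ≤ u → u < t → wpos d x s u ∉ W) = hseq d W (fun v => v = y) t x := by
    intro t; simp [hseq]
  unfold hitFrom pot
  simp only [h]
  rw [tsum_shift, ← tsum_mul_left]
  · congr 1
    funext t
    rw [hseq_eq]
    have : hseq d W (fun v => v = y) 1 = mw d W y • (Pi.single y (1 : ℝ) : Pt d → ℝ) := by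
      funext v
      rw [hseq_one]
      by_cases hv : v = y
      · subst hv; simp
      · simp [hv]
    rw [hseq_eq] at this
    simp only [pow_zero, Module.End.one_apply] at this
    rw [this, map_smul]
    simp
  · exact prob_false _ _ _ (by simp)

/-! ### Part 2: potential theory of the killed walk -/

/-- The averaging operator. -/
noncomputable def avg (d : ℕ) (f : Pt d → ℝ) (x : Pt d) : ℝ :=
  (∑ i, (f (x + ev d i) + f (x - ev d i))) / (2 * d : ℝ)

lemma Qop_empty (d : ℕ) (f : Pt d → ℝ) (x : Pt d) : Qop d ∅ f x = avg d f x := by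
  simp [Qop_apply, avg]

lemma avg_mono (d : ℕ) {f g : Pt d → ℝ} (x : Pt d) (h1 : ∀ i, f (x + ev d i) ≤ g (x + ev d i))
    (h2 : ∀ i, f (x - ev d i) ≤ g (x - ev d i)) : avg d f x ≤ avg d g x := by
  unfold avg
  gcongr with i
  · exact h1 i
  · exact h2 i

lemma avg_const (d : ℕ) (hd : 0 < d) (c : ℝ) (x : Pt d) : avg d (fun _ => c) x = c := by
  have : (d : ℝ) ≠ 0 := by positivity
  simp only [avg, Finset.sum_const, Finset.card_univ, Fintype.card_fin, nsmul_eq_mul]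
  field_simp
  ring

lemma avg_sub (d : ℕ) (f g : Pt d → ℝ) (x : Pt d) :
    avg d (fun v => f v - g v) x = avg d f x - avg d g x := by
  simp only [avg, ← sub_div, ← Finset.sum_sub_distrib]
  congr 1
  refine Finset.sum_congr rfl fun i _ => ?_
  ring

lemma avg_smul (d : ℕ) (c : ℝ) (f : Pt d → ℝ) (x : Pt d) :
    avg d (fun v => c * f v) x = c * avg d f x := by
  simp only [avg, ← mul_div_assoc, Finset.mul_sum]
  congr 1
  refine Finset.sum_congr rfl fun i _ => ?_
  ring

lemma avg_sum (d : ℕ) {ι : Type*} (s : Finset ι) (f : ι → Pt d → ℝ) (x : Pt d) :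
    avg d (fun v => ∑ z ∈ s, f z v) x = ∑ z ∈ s, avg d (f z) x := by
  simp only [avg, ← Finset.sum_div]
  congr 1
  rw [Finset.sum_comm]
  refine Finset.sum_congr rfl fun i _ => ?_
  rw [Finset.sum_add_distrib]

lemma avg_translate (d : ℕ) (f : Pt d → ℝ) (z x : Pt d) :
    avg d (fun v => f (v - z)) x = avg d f (x - z) := by
  simp only [avg]
  congr 1
  refine Finset.sum_congr rfl fun i _ => ?_
  congr 2 <;> abel

lemma Qop_eq_avg (d : ℕ) (W : Set (Pt d)) (f : Pt d → ℝ) (x : Pt d) [DecidablePred (· ∈ W)] :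
    Qop d W f x = avg d (fun v => if v ∈ W then 0 else f v) x := by
  rw [Qop_apply]
  unfold avg
  congr 1
  refine Finset.sum_congr rfl fun i _ => ?_
  congr

lemma mw_eq_avg (d : ℕ) (W : Set (Pt d)) (x : Pt d) [DecidablePred (· ∈ W)] :
    mw d W x = avg d (fun v => if v ∈ W then 1 else 0) x := by
  unfold mw avg
  congr 1
  refine Finset.sum_congr rfl fun i _ => ?_
  congr

lemma avg_le (d : ℕ) {f g : Pt d → ℝ} (h : ∀ v, f v ≤ g v) (x : Pt d) : avg d f x ≤ avg d g x :=
  avg_mono d x (fun _ => h _) (fun _ => h _)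

lemma avg_add (d : ℕ) (f g : Pt d → ℝ) (x : Pt d) :
    avg d (fun v => f v + g v) x = avg d f x + avg d g x := by
  simp only [avg, ← add_div, ← Finset.sum_add_distrib]
  congr 1
  refine Finset.sum_congr rfl fun i _ => ?_
  ring

lemma avg_zero (d : ℕ) (x : Pt d) : avg d (fun _ => 0) x = 0 := by
  simp [avg]

lemma avg_nonneg (d : ℕ) {f : Pt d → ℝ} (h : ∀ v, 0 ≤ f v) (x : Pt d) : 0 ≤ avg d f x := by
  rw [← avg_zero d x]; exact avg_le d h x

lemma Qop_mono (d : ℕ) (W : Set (Pt d)) {f g : Pt d → ℝ} (h : ∀ v, v ∉ W → f v ≤ g v) (x : Pt d) :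
    Qop d W f x ≤ Qop d W g x := by
  classical
  rw [Qop_eq_avg, Qop_eq_avg]
  apply avg_le
  intro v
  split_ifs with hv
  · exact le_rfl
  · exact h v hv

lemma Qop_nonneg (d : ℕ) (W : Set (Pt d)) {f : Pt d → ℝ} (h : ∀ v, 0 ≤ f v) (x : Pt d) :
    0 ≤ Qop d W f x := by
  classical
  rw [Qop_eq_avg]
  apply avg_nonneg
  intro v
  split_ifs
  · exact le_rfl
  · exact h v

lemma Qop_anti (d : ℕ) {A W : Set (Pt d)} (hAW : A ⊆ W) {f : Pt d → ℝ} (h : ∀ v, 0 ≤ f v)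
    (x : Pt d) : Qop d W f x ≤ Qop d A f x := by
  classical
  rw [Qop_eq_avg, Qop_eq_avg]
  apply avg_le
  intro v
  by_cases h1 : v ∈ W <;> by_cases h2 : v ∈ A
  · simp [h1, h2]
  · simp [h1, h2, h]
  · exact absurd (hAW h2) h1
  · simp [h1, h2]

lemma mw_add_Qop_le (d : ℕ) (W : Set (Pt d)) {f : Pt d → ℝ} (h : ∀ v ∈ W, 1 ≤ f v) (x : Pt d) :
    mw d W x + Qop d W f x ≤ avg d f x := by
  classical
  rw [Qop_eq_avg, mw_eq_avg, ← avg_add]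
  apply avg_le
  intro v
  split_ifs with h1
  · simpa using h v h1
  · simp

lemma mw_nonneg (d : ℕ) (W : Set (Pt d)) (x : Pt d) : 0 ≤ mw d W x := by
  classical
  rw [mw_eq_avg]
  apply avg_nonneg
  intro v
  split_ifs <;> norm_num

lemma mw_mono (d : ℕ) {A W : Set (Pt d)} (h : A ⊆ W) (x : Pt d) : mw d A x ≤ mw d W x := by
  classical
  rw [mw_eq_avg, mw_eq_avg]
  apply avg_le
  intro v
  by_cases h2 : v ∈ A
  · simp [h2, h h2]
  · simp only [h2, if_false]; split_ifs <;> norm_num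

lemma mw_union_le (d : ℕ) (A O : Set (Pt d)) (x : Pt d) :
    mw d (A ∪ O) x ≤ mw d A x + mw d O x := by
  classical
  rw [mw_eq_avg, mw_eq_avg, mw_eq_avg, ← avg_add]
  apply avg_le
  intro v
  by_cases h1 : v ∈ A <;> by_cases h2 : v ∈ O <;> simp [h1, h2]

lemma Qpow_nonneg (d : ℕ) (W : Set (Pt d)) {g : Pt d → ℝ} (h : ∀ v, 0 ≤ g v) (t : ℕ) (x : Pt d) :
    0 ≤ (Qop d W ^ t) g x := by
  induction t generalizing x with
  | zero => simpa using h x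
  | succ t ih =>
    rw [pow_succ']
    exact Qop_nonneg d W ih x

/-- partial potentials -/
noncomputable def part (d : ℕ) (W : Set (Pt d)) (g : Pt d → ℝ) (T : ℕ) : Pt d → ℝ :=
  ∑ t ∈ Finset.range T, (Qop d W ^ t) g

lemma part_zero (d : ℕ) (W : Set (Pt d)) (g : Pt d → ℝ) : part d W g 0 = 0 := by simp [part]

lemma part_succ (d : ℕ) (W : Set (Pt d)) (g : Pt d → ℝ) (T : ℕ) (x : Pt d) :
    part d W g (T + 1) x = g x + Qop d W (part d W g T) x := by
  unfold part
  rw [Finset.sum_range_succ', map_sum, add_comm]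
  simp only [pow_zero, Module.End.one_apply, Pi.add_apply, pow_succ', Module.End.mul_apply]

/-- `φ` is a nonnegative supersolution for the source `g ≥ 0` and the walk killed on `W`. -/
def Sup (d : ℕ) (W : Set (Pt d)) (g φ : Pt d → ℝ) : Prop :=
  (∀ x, 0 ≤ g x) ∧ (∀ x, 0 ≤ φ x) ∧ ∀ x, g x + Qop d W φ x ≤ φ x

lemma part_le (d : ℕ) (W : Set (Pt d)) (g φ : Pt d → ℝ) (h : Sup d W g φ) (T : ℕ) (x : Pt d) :
    part d W g T x ≤ φ x := by
  induction T generalizing x with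
  | zero => simpa [part_zero] using h.2.1 x
  | succ T ih =>
    rw [part_succ]
    have := Qop_mono d W (fun v _ => ih v) x
    linarith [h.2.2 x]

lemma pot_summable (d : ℕ) (W : Set (Pt d)) (g φ : Pt d → ℝ) (h : Sup d W g φ) (x : Pt d) :
    Summable (fun t => (Qop d W ^ t) g x) := by
  refine summable_of_sum_range_le (c := φ x) (fun t => Qpow_nonneg d W h.1 t x) fun T => ?_
  have := part_le d W g φ h T x
  simpa [part] using this

lemma pot_le (d : ℕ) (W : Set (Pt d)) (g φ : Pt d → ℝ) (h : Sup d W g φ) (x : Pt d) :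
    pot d W g x ≤ φ x := by
  refine (pot_summable d W g φ h x).tsum_le_of_sum_range_le fun T => ?_
  have := part_le d W g φ h T x
  simpa [part] using this

lemma pot_nonneg (d : ℕ) (W : Set (Pt d)) (g : Pt d → ℝ) (h : ∀ x, 0 ≤ g x) (x : Pt d) :
    0 ≤ pot d W g x := tsum_nonneg fun t => Qpow_nonneg d W h t x

lemma part_le_pot (d : ℕ) (W : Set (Pt d)) (g φ : Pt d → ℝ) (h : Sup d W g φ) (T : ℕ) (x : Pt d) :
    part d W g T x ≤ pot d W g x := by
  have := (pot_summable d W g φ h x).sum_le_tsum (Finset.range T)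
    (fun t _ => Qpow_nonneg d W h.1 t x)
  simpa [part, pot] using this

lemma pot_le_of_part (d : ℕ) (W : Set (Pt d)) (g φ : Pt d → ℝ) (h : Sup d W g φ) (x : Pt d) (c : ℝ)
    (hc : ∀ T, part d W g T x ≤ c) : pot d W g x ≤ c := by
  refine (pot_summable d W g φ h x).tsum_le_of_sum_range_le fun T => ?_
  simpa [part] using hc T

lemma pot_eq (d : ℕ) (W : Set (Pt d)) (g φ : Pt d → ℝ) (h : Sup d W g φ) (x : Pt d) :
    pot d W g x = g x + Qop d W (pot d W g) x := by
  classical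
  have hs := pot_summable d W g φ h
  have h1 : pot d W g x = g x + ∑' t, (Qop d W ^ (t + 1)) g x := by
    unfold pot
    rw [(hs x).tsum_eq_zero_add]
    simp
  rw [h1]
  congr 1
  have h2 : ∀ v : Pt d, HasSum (fun t => if v ∈ W then 0 else (Qop d W ^ t) g v)
      (if v ∈ W then 0 else pot d W g v) := by
    intro v
    split_ifs
    · exact hasSum_zero
    · exact (hs v).hasSum
  rw [Qop_eq_avg]
  have h3 : HasSum (fun t => (Qop d W ^ (t + 1)) g x)
      (avg d (fun v => if v ∈ W then 0 else pot d W g v) x) := by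
    have : (fun t => (Qop d W ^ (t + 1)) g x) =
        fun t => avg d (fun v => if v ∈ W then 0 else (Qop d W ^ t) g v) x := by
      funext t
      rw [pow_succ', Module.End.mul_apply, Qop_eq_avg]
    rw [this]
    unfold avg
    apply HasSum.div_const
    apply hasSum_sum
    intro i _
    exact (h2 _).add (h2 _)
  exact h3.tsum_eq

lemma Sup_anti (d : ℕ) {A W : Set (Pt d)} (hAW : A ⊆ W) (g φ : Pt d → ℝ) (h : Sup d A g φ) :
    Sup d W g φ :=
  ⟨h.1, h.2.1, fun x => by linarith [h.2.2 x, Qop_anti d hAW h.2.1 x]⟩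

lemma Sup_pot (d : ℕ) (W : Set (Pt d)) (g φ : Pt d → ℝ) (h : Sup d W g φ) :
    Sup d W g (pot d W g) :=
  ⟨h.1, pot_nonneg d W g h.1, fun x => (pot_eq d W g φ h x).ge⟩

lemma pot_anti (d : ℕ) {A W : Set (Pt d)} (hAW : A ⊆ W) (g φ : Pt d → ℝ) (h : Sup d A g φ)
    (x : Pt d) : pot d W g x ≤ pot d A g x :=
  pot_le d W g _ (Sup_anti d hAW g _ (Sup_pot d A g φ h)) x

/-- Comparison of potentials for two killing sets. -/
lemma pot_compare (d : ℕ) {A W : Set (Pt d)} (hAW : A ⊆ W) (g ψ φ : Pt d → ℝ) (h : Sup d A g ψ)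
    (M : ℝ) (hM : 0 ≤ M) (hφ : ∀ x, 0 ≤ φ x) (hφ1 : ∀ v ∈ W, v ∉ A → 1 ≤ φ v)
    (hφs : ∀ x, avg d φ x ≤ φ x) (hb : ∀ v ∈ W, v ∉ A → pot d A g v ≤ M) (x : Pt d) :
    pot d A g x ≤ pot d W g x + M * φ x := by
  classical
  refine pot_le_of_part d A g ψ h x _ fun T => ?_
  have hW := Sup_anti d hAW g ψ h
  induction T generalizing x with
  | zero =>
    simp only [part_zero, Pi.zero_apply]
    have := pot_nonneg d W g h.1 x
    have := mul_nonneg hM (hφ x)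
    linarith
  | succ T ih =>
    rw [part_succ, pot_eq d W g ψ hW x]
    have key : Qop d A (part d A g T) x ≤ Qop d W (pot d W g) x + M * avg d φ x := by
      rw [Qop_eq_avg, Qop_eq_avg, ← avg_smul, ← avg_add]
      apply avg_le
      intro v
      have h0 := mul_nonneg hM (hφ v)
      by_cases h1 : v ∈ A
      · simp [h1, hAW h1, h0]
      · by_cases h2 : v ∈ W
        · simp only [h1, h2, if_false, if_true, zero_add]
          have := part_le_pot d A g ψ h T v
          have := hb v h2 h1
          nlinarith [hφ1 v h2 h1]
        · simp only [h1, h2, if_false]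
          exact ih v
    have := mul_le_mul_of_nonneg_left (hφs x) hM
    linarith

open Classical in
/-- Symmetrised killed operator identity used for the symmetry of the killed Green function. -/
lemma Qpow_symm (d : ℕ) (A : Set (Pt d)) (t : ℕ) : ∀ x y : Pt d, x ∉ A → y ∉ A →
    (Qop d A ^ t) (Pi.single y 1) x = (Qop d A ^ t) (Pi.single x 1) y := by
  induction t with
  | zero =>
    intro x y _ _
    simp only [pow_zero, Module.End.one_apply, Pi.single_apply]
    simp only [eq_comm]
  | succ t ih =>
    intro x y hx hy
    have hL : (Qop d A ^ (t + 1)) (Pi.single y 1) x =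
        avg d (fun v => if v ∈ A then 0 else (Qop d A ^ t) (Pi.single v 1) y) x := by
      rw [pow_succ', Module.End.mul_apply, Qop_eq_avg]
      congr 1
      funext v
      split_ifs with hv
      · rfl
      · exact ih v y hv hy
    rw [hL, pow_succ, Module.End.mul_apply]
    have loc : ∀ f g : Pt d → ℝ, (∀ v, v ∉ A → f v = g v) → ∀ v, v ∉ A →
        (Qop d A ^ t) f v = (Qop d A ^ t) g v := by
      intro f g hfg
      clear hL ih
      induction t with
      | zero => simpa using hfg
      | succ t iht =>
        intro v hv
        rw [pow_succ', Module.End.mul_apply, Module.End.mul_apply, Qop_eq_avg, Qop_eq_avg]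
        congr 1
        funext w
        split_ifs with hw
        · rfl
        · exact iht w hw
    have hR : ∀ v, v ∉ A → Qop d A (Pi.single x 1) v =
        ((2 * d : ℝ)⁻¹ • ∑ i, ((if x + ev d i ∈ A then (0 : Pt d → ℝ) else Pi.single (x + ev d i) 1)
          + (if x - ev d i ∈ A then (0 : Pt d → ℝ) else Pi.single (x - ev d i) 1))) v := by
      intro v hv
      rw [Qop_apply, div_eq_inv_mul, Pi.smul_apply, smul_eq_mul, Finset.sum_apply]
      congr 1
      refine Finset.sum_congr rfl fun i _ => ?_
      rw [Pi.add_apply, add_comm]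
      have e1 : (if v - ev d i ∈ A then 0 else (Pi.single x (1 : ℝ) : Pt d → ℝ) (v - ev d i)) =
          (if x + ev d i ∈ A then (0 : Pt d → ℝ) else Pi.single (x + ev d i) 1) v := by
        by_cases hv' : v = x + ev d i
        · subst hv'; simp [hv, hx]
        · have : v - ev d i ≠ x := fun h => hv' (by rw [← h]; abel)
          split_ifs <;> simp [this, hv']
      have e2 : (if v + ev d i ∈ A then 0 else (Pi.single x (1 : ℝ) : Pt d → ℝ) (v + ev d i)) =
          (if x - ev d i ∈ A then (0 : Pt d → ℝ) else Pi.single (x - ev d i) 1) v := by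
        by_cases hv' : v = x - ev d i
        · subst hv'; simp [hv, hx]
        · have : v + ev d i ≠ x := fun h => hv' (by rw [← h]; abel)
          split_ifs <;> simp [this, hv']
      rw [e1, e2]
    rw [loc _ _ hR y hy, map_smul, map_sum, Pi.smul_apply, smul_eq_mul, Finset.sum_apply]
    unfold avg
    rw [div_eq_inv_mul]
    congr 1
    refine Finset.sum_congr rfl fun i _ => ?_
    rw [map_add, Pi.add_apply]
    congr 1
    · by_cases hc : x + ev d i ∈ A <;> simp [hc]
    · by_cases hc : x - ev d i ∈ A <;> simp [hc]

lemma pot_symm (d : ℕ) (A : Set (Pt d)) (x y : Pt d) (hx : x ∉ A) (hy : y ∉ A) :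
    pot d A (Pi.single y 1) x = pot d A (Pi.single x 1) y := by
  unfold pot
  congr 1
  funext t
  exact Qpow_symm d A t x y hx hy

/-- Maximum principle. -/
lemma maxp (d : ℕ) (hd : 0 < d) (f : Pt d → ℝ) (h : ∀ x, 0 < f x → f x ≤ avg d f x)
    (hfin : ∀ ε : ℝ, 0 < ε → {x | ε < f x}.Finite) (x : Pt d) : f x ≤ 0 := by
  by_contra hx
  push Not at hx
  obtain ⟨m, hmS, hm⟩ := Set.exists_max_image _ f (hfin (f x / 2) (by linarith))
    ⟨x, by show f x / 2 < f x; linarith⟩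
  have hmx : f x ≤ f m := hm x (by show f x / 2 < f x; linarith)
  have hmax : ∀ v, f v ≤ f m := by
    intro v
    by_cases hv : f x / 2 < f v
    · exact hm v hv
    · linarith
  have hfin2 : {v | f v = f m}.Finite := (hfin (f m / 2) (by linarith)).subset (by
    intro v hv
    have hv : f v = f m := hv
    show f m / 2 < f v
    linarith)
  obtain ⟨p, hp, hpm⟩ := Set.exists_max_image _ (fun v : Pt d => v ⟨0, hd⟩) hfin2 ⟨m, rfl⟩
  have hp : f p = f m := hp
  have h1 := h p (by linarith)
  have h2 : f (p + ev d ⟨0, hd⟩) = f m := by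
    by_contra hne
    have hlt : f (p + ev d ⟨0, hd⟩) < f m := lt_of_le_of_ne (hmax _) hne
    have : avg d f p < f m := by
      rw [← avg_const d hd (f m) p]
      unfold avg
      have : (0 : ℝ) < d := by exact_mod_cast hd
      apply div_lt_div_of_pos_right _ (by positivity)
      apply Finset.sum_lt_sum
      · intro i _
        exact add_le_add (hmax _) (hmax _)
      · exact ⟨⟨0, hd⟩, Finset.mem_univ _, add_lt_add_of_lt_of_le hlt (hmax _)⟩
    linarith
  have h3 := hpm (p + ev d ⟨0, hd⟩) h2
  simp [ev] at h3

/-! ### Part 3: explicit super- and subharmonic functions -/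

open Asymptotics Filter Topology in
lemma taylor2 (β : ℝ) (ε : ℝ) (hε : 0 < ε) : ∃ h0 : ℝ, 0 < h0 ∧ h0 < 1 / 2 ∧ ∀ h : ℝ, |h| ≤ h0 →
    |(1 + h) ^ (-β) - (1 - β * h + β * (β + 1) / 2 * h ^ 2)| ≤ ε * h ^ 2 := by
  have hder : ∀ p : ℝ, ∀ h ∈ Set.Ioo (-1 / 2 : ℝ) (1 / 2),
      HasDerivAt (fun h : ℝ => (1 + h) ^ p) (p * (1 + h) ^ (p - 1)) h := by
    intro p h hh
    have h1 : HasDerivAt (fun h : ℝ => 1 + h) 1 h := by simpa using (hasDerivAt_id h).const_add 1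
    have := h1.rpow_const (p := p) (Or.inl (by have := hh.1; linarith))
    simpa using this
  have h0mem : (0 : ℝ) ∈ Set.Ioo (-1 / 2 : ℝ) (1 / 2) := by constructor <;> norm_num
  set s := Set.Ioo (-1 / 2 : ℝ) (1 / 2) with hs
  have hl1 : (fun h : ℝ => (-β) * (1 + h) ^ (-β - 1) + β - β * (β + 1) * h) =o[𝓝[s] 0]
      fun h => (h - 0) ^ 1 := by
    have h1 := (((hder (-β - 1) 0 h0mem).const_mul (-β))).isLittleO
    have h2 : (fun h : ℝ => (-β) * (1 + h) ^ (-β - 1) + β - β * (β + 1) * h) =o[𝓝 0]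
        fun h => (h - 0) ^ 1 := by
      simp only [pow_one]
      refine h1.congr' (Eventually.of_forall fun h => ?_) (Eventually.of_forall fun h => rfl)
      simp
      ring
    exact h2.mono nhdsWithin_le_nhds
  have hl2 := (convex_Ioo (-1 / 2 : ℝ) (1 / 2)).isLittleO_pow_succ_real h0mem
    (f := fun h : ℝ => (1 + h) ^ (-β) + β * h - β * (β + 1) / 2 * h ^ 2)
    (f' := fun h : ℝ => (-β) * (1 + h) ^ (-β - 1) + β - β * (β + 1) * h)
    (by
      intro h hh
      have h1 := hder (-β) h hh
      have h2 : HasDerivAt (fun h : ℝ => β * h) β h := by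
        simpa using (hasDerivAt_id h).const_mul β
      have h3 : HasDerivAt (fun h : ℝ => β * (β + 1) / 2 * h ^ 2) (β * (β + 1) * h) h := by
        refine ((hasDerivAt_pow 2 h).const_mul (β * (β + 1) / 2)).congr_deriv ?_
        norm_num
        ring
      exact ((h1.add h2).sub h3).hasDerivWithinAt) hl1
  rw [nhdsWithin_eq_nhds.2 (Ioo_mem_nhds h0mem.1 h0mem.2)] at hl2
  have h3 := hl2.def hε
  rw [Metric.eventually_nhds_iff] at h3
  obtain ⟨δ, hδ, h4⟩ := h3
  refine ⟨min (δ / 2) (1 / 4), by positivity, ?_, ?_⟩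
  · exact lt_of_le_of_lt (min_le_right _ _) (by norm_num)
  · intro h hh
    have hd : dist h 0 < δ := by
      rw [Real.dist_eq, sub_zero]
      have := hh.trans (min_le_left _ _)
      linarith
    have := h4 hd
    simp only [Real.norm_eq_abs, sub_zero, add_zero, Real.one_rpow, mul_zero] at this
    have e : |h ^ (1 + 1)| = h ^ 2 := by norm_num
    rw [e] at this
    convert this using 2
    norm_num
    ring

/-- Squared Euclidean norm. -/
noncomputable def N (d : ℕ) (v : Pt d) : ℝ := ∑ i, (v i : ℝ) ^ 2

lemma N_nonneg (d : ℕ) (v : Pt d) : 0 ≤ N d v := Finset.sum_nonneg fun i _ => sq_nonneg _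

lemma N_add_ev (d : ℕ) (v : Pt d) (i : Fin d) : N d (v + ev d i) = N d v + 1 + 2 * v i := by
  unfold N
  rw [← Finset.add_sum_erase _ _ (Finset.mem_univ i),
    ← Finset.add_sum_erase _ (fun j => (v j : ℝ) ^ 2) (Finset.mem_univ i)]
  have : ∑ j ∈ Finset.univ.erase i, (((v + ev d i) j : ℤ) : ℝ) ^ 2 =
      ∑ j ∈ Finset.univ.erase i, (v j : ℝ) ^ 2 := by
    refine Finset.sum_congr rfl fun j hj => ?_
    have := Finset.ne_of_mem_erase hj
    simp [ev, this]
  rw [this]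
  simp [ev]
  ring

lemma N_sub_ev (d : ℕ) (v : Pt d) (i : Fin d) : N d (v - ev d i) = N d v + 1 - 2 * v i := by
  have := N_add_ev d (v - ev d i) i
  rw [sub_add_cancel] at this
  have e : (((v - ev d i) i : ℤ) : ℝ) = v i - 1 := by simp [ev]
  rw [e] at this
  linarith

lemma sq_le_N (d : ℕ) (v : Pt d) (i : Fin d) : (v i : ℝ) ^ 2 ≤ N d v :=
  Finset.single_le_sum (f := fun j => (v j : ℝ) ^ 2) (fun j _ => sq_nonneg _) (Finset.mem_univ i)

/-- The comparison functions. -/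
noncomputable def uu (d : ℕ) (a β : ℝ) (v : Pt d) : ℝ := (N d v + a) ^ (-β)

lemma avg_uu (d : ℕ) (hd : 0 < d) (a β ε h0 : ℝ) (hε : 0 < ε) (hh0 : 0 < h0) (hh1 : h0 < 1 / 2)
    (hT : ∀ h : ℝ, |h| ≤ h0 →
      |(1 + h) ^ (-β) - (1 - β * h + β * (β + 1) / 2 * h ^ 2)| ≤ ε * h ^ 2) (v : Pt d)
    (ha : 0 ≤ a) (hs : 4 / h0 ^ 2 ≤ N d v + a + 1) :
    |avg d (uu d a β) v - (N d v + a + 1) ^ (-β) *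
      (1 + β * (β + 1) / 2 * (4 * N d v / (N d v + a + 1) ^ 2) / d)| ≤
      (N d v + a + 1) ^ (-β) * (ε * (4 * N d v / (N d v + a + 1) ^ 2) / d) := by
  set s := N d v + a + 1 with hs_def
  have hd' : (0 : ℝ) < d := by exact_mod_cast hd
  have hN := N_nonneg d v
  have hs0 : 0 < s := by linarith
  have hh : ∀ i, |2 * (v i : ℝ) / s| ≤ h0 := by
    intro i
    apply abs_le_of_sq_le_sq _ hh0.le
    rw [div_pow, div_le_iff₀ (by positivity)]
    have h1 := sq_le_N d v i
    have h2 : 4 ≤ h0 ^ 2 * s := by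
      rw [div_le_iff₀ (by positivity)] at hs; linarith
    nlinarith
  have e1 : ∀ i, uu d a β (v + ev d i) = s ^ (-β) * (1 + 2 * (v i : ℝ) / s) ^ (-β) := by
    intro i
    have := (abs_le.1 (hh i)).1
    rw [← Real.mul_rpow hs0.le (by linarith)]
    unfold uu
    congr 1
    rw [N_add_ev]
    field_simp
    rw [hs_def]; ring
  have e2 : ∀ i, uu d a β (v - ev d i) = s ^ (-β) * (1 + -(2 * (v i : ℝ) / s)) ^ (-β) := by
    intro i
    have := (abs_le.1 (hh i)).2
    rw [← Real.mul_rpow hs0.le (by linarith)]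
    unfold uu
    congr 1
    rw [N_sub_ev]
    field_simp
    rw [hs_def]; ring
  have e3 : ∑ i, (2 * (v i : ℝ) / s) ^ 2 = 4 * N d v / s ^ 2 := by
    simp only [div_pow, mul_pow, ← Finset.sum_div, ← Finset.mul_sum, N]
    norm_num
  have hsp : 0 < s ^ (-β) := Real.rpow_pos_of_pos hs0 _
  have e4 : avg d (uu d a β) v - s ^ (-β) * (1 + β * (β + 1) / 2 * (4 * N d v / s ^ 2) / d) =
      s ^ (-β) * ((∑ i, (((1 + 2 * (v i : ℝ) / s) ^ (-β) - (1 - β * (2 * (v i : ℝ) / s) +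
        β * (β + 1) / 2 * (2 * (v i : ℝ) / s) ^ 2)) + ((1 + -(2 * (v i : ℝ) / s)) ^ (-β) -
        (1 - β * (-(2 * (v i : ℝ) / s)) +
        β * (β + 1) / 2 * (-(2 * (v i : ℝ) / s)) ^ 2)))) / (2 * d)) := by
    unfold avg
    simp only [e1, e2]
    rw [← e3]
    have : ∀ i, (((1 + 2 * (v i : ℝ) / s) ^ (-β) - (1 - β * (2 * (v i : ℝ) / s) +
        β * (β + 1) / 2 * (2 * (v i : ℝ) / s) ^ 2)) + ((1 + -(2 * (v i : ℝ) / s)) ^ (-β) -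
        (1 - β * (-(2 * (v i : ℝ) / s)) +
        β * (β + 1) / 2 * (-(2 * (v i : ℝ) / s)) ^ 2))) =
        ((1 + 2 * (v i : ℝ) / s) ^ (-β) + (1 + -(2 * (v i : ℝ) / s)) ^ (-β)) -
          (2 + β * (β + 1) * (2 * (v i : ℝ) / s) ^ 2) := by intro i; ring
    simp only [this, ← mul_add, Finset.sum_sub_distrib, ← Finset.mul_sum]
    rw [Finset.sum_add_distrib (f := fun _ => (2 : ℝ)), ← Finset.mul_sum]
    simp only [Finset.sum_const, Finset.card_univ, Fintype.card_fin, nsmul_eq_mul]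
    field_simp
  rw [e4, abs_mul, abs_of_pos hsp]
  apply mul_le_mul_of_nonneg_left _ hsp.le
  rw [abs_div, abs_of_pos (by positivity : (0 : ℝ) < 2 * d), div_le_div_iff₀ (by positivity) hd']
  have : |∑ i, (((1 + 2 * (v i : ℝ) / s) ^ (-β) - (1 - β * (2 * (v i : ℝ) / s) +
        β * (β + 1) / 2 * (2 * (v i : ℝ) / s) ^ 2)) + ((1 + -(2 * (v i : ℝ) / s)) ^ (-β) -
        (1 - β * (-(2 * (v i : ℝ) / s)) +
        β * (β + 1) / 2 * (-(2 * (v i : ℝ) / s)) ^ 2)))| ≤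
        ∑ i, 2 * ε * (2 * (v i : ℝ) / s) ^ 2 := by
    refine (Finset.abs_sum_le_sum_abs _ _).trans (Finset.sum_le_sum fun i _ => ?_)
    refine (abs_add_le _ _).trans ?_
    have h1 := hT _ (hh i)
    have h2 := hT (-(2 * (v i : ℝ) / s)) (by rw [abs_neg]; exact hh i)
    rw [neg_sq] at h2
    rw [neg_sq]
    linarith
  rw [← Finset.mul_sum, e3] at this
  nlinarith

lemma super_uu (d : ℕ) (hd : 0 < d) (β : ℝ) (hβ : 0 < β) (hβd : 2 * (β + 1) < d) :
    ∃ a0 : ℝ, 1 ≤ a0 ∧ ∀ a, a0 ≤ a → ∀ v, avg d (uu d a β) v ≤ uu d a β v := by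
  have hd' : (0 : ℝ) < d := by exact_mod_cast hd
  obtain ⟨h0, hh0, hh1, hT⟩ := taylor2 β (min (β * (d - 2 * (β + 1)) / 4) (β * (β + 1) / 2))
    (by apply lt_min <;> [apply div_pos (mul_pos hβ (by linarith)); skip] <;> positivity)
  set ε := min (β * (d - 2 * (β + 1)) / 4) (β * (β + 1) / 2) with hε
  have hε1 : ε ≤ β * (d - 2 * (β + 1)) / 4 := min_le_left _ _
  have hε2 : ε ≤ β * (β + 1) / 2 := min_le_right _ _
  have hεp : 0 < ε := by
    apply lt_min <;> [apply div_pos (mul_pos hβ (by linarith)); skip] <;> positivity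
  refine ⟨4 / h0 ^ 2 + 1, by have : 0 < 4 / h0 ^ 2 := by positivity
                             linarith, fun a ha v => ?_⟩
  have hq : 0 < 4 / h0 ^ 2 := by positivity
  have hN := N_nonneg d v
  have key := avg_uu d hd a β ε h0 hεp hh0 hh1 hT v (by linarith) (by linarith)
  set s := N d v + a + 1 with hs
  have hs0 : 0 < s := by linarith
  have hsp : 0 < s ^ (-β) := Real.rpow_pos_of_pos hs0 _
  have h16 : 1 / s ≤ h0 := by
    rw [div_le_iff₀ hs0]
    have h2 : 4 ≤ h0 ^ 2 * s := by
      have : 4 / h0 ^ 2 ≤ s := by linarith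
      rw [div_le_iff₀ (by positivity)] at this; linarith
    nlinarith
  have h17 := hT (-(1 / s)) (by rw [abs_neg, abs_of_pos (by positivity)]; exact h16)
  have e : uu d a β v = s ^ (-β) * (1 + -(1 / s)) ^ (-β) := by
    rw [← Real.mul_rpow hs0.le (by linarith)]
    unfold uu
    congr 1
    field_simp
    rw [hs]; ring
  rw [e]
  have h18 := (abs_le.1 h17).1
  have h19 := (abs_le.1 key).2
  refine le_trans (b := s ^ (-β) * (1 + β / s)) ?_ ?_
  · have : avg d (uu d a β) v ≤ s ^ (-β) * (1 + β * (β + 1) / 2 * (4 * N d v / s ^ 2) / d +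
      (ε * (4 * N d v / s ^ 2) / d)) := by linarith
    refine this.trans (mul_le_mul_of_nonneg_left ?_ hsp.le)
    have h4 : 4 * N d v / s ^ 2 ≤ 4 / s := by
      rw [div_le_div_iff₀ (by positivity) hs0]
      nlinarith
    have h5 : β * (β + 1) / 2 * (4 * N d v / s ^ 2) / d + (ε * (4 * N d v / s ^ 2) / d) ≤
        (β * (β + 1) / 2 + ε) * (4 / s) / d := by
      rw [← add_div, ← add_mul]
      apply div_le_div_of_nonneg_right _ hd'.le
      exact mul_le_mul_of_nonneg_left h4 (by positivity)
    have h6 : (β * (β + 1) / 2 + ε) * (4 / s) / d ≤ β / s := by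
      rw [mul_div_assoc', div_div, div_le_div_iff₀ (by positivity) hs0]
      have : (β * (β + 1) / 2 + ε) * 4 ≤ β * d := by nlinarith
      nlinarith
    linarith
  · apply mul_le_mul_of_nonneg_left _ hsp.le
    have : 0 ≤ (β * (β + 1) / 2 - ε) * (1 / s) ^ 2 := mul_nonneg (by linarith) (sq_nonneg _)
    have e5 : β / s = β * (1 / s) := by ring
    rw [e5]
    nlinarith

lemma sub_uu (d : ℕ) (hd : 0 < d) (a β : ℝ) (ha : 0 ≤ a) (hβ : 0 < β)
    (hβd : (d : ℝ) < 2 * (β + 1)) :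
    ∃ R : ℝ, 1 ≤ R ∧ ∀ v, R ≤ N d v → uu d a β v ≤ avg d (uu d a β) v := by
  have hd' : (0 : ℝ) < d := by exact_mod_cast hd
  set κ := β * (2 * (β + 1) - d) with hκ
  have hκp : 0 < κ := mul_pos hβ (by linarith)
  obtain ⟨h0, hh0, hh1, hT⟩ := taylor2 β (min (κ / 8) (β * (β + 1) / 2)) (by
    apply lt_min <;> positivity)
  set ε := min (κ / 8) (β * (β + 1) / 2) with hε
  have hε1 : ε ≤ κ / 8 := min_le_left _ _
  have hε2 : ε ≤ β * (β + 1) / 2 := min_le_right _ _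
  have hεp : 0 < ε := by apply lt_min <;> positivity
  set B := 2 * β * (β + 1) with hB
  have hBp : 0 < B := by positivity
  have hq : 0 < 4 / h0 ^ 2 := by positivity
  -- need `(B - 4ε) N / (d s) ≥ β + B / s`
  refine ⟨4 / h0 ^ 2 + 1 + 2 * (B * d + B * (a + 1)) / κ, by
    have : 0 ≤ 2 * (B * d + B * (a + 1)) / κ := by positivity
    linarith, fun v hv => ?_⟩
  have hR2 : 0 ≤ 2 * (B * d + B * (a + 1)) / κ := by positivity
  have hN := N_nonneg d v
  have key := avg_uu d hd a β ε h0 hεp hh0 hh1 hT v (by linarith) (by linarith)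
  have hNbig : 2 * (B * d + B * (a + 1)) ≤ κ * N d v := by
    have : 2 * (B * d + B * (a + 1)) / κ ≤ N d v := by linarith
    rw [div_le_iff₀ hκp] at this
    linarith
  set s := N d v + a + 1 with hs
  have hs0 : 0 < s := by linarith
  have hsp : 0 < s ^ (-β) := Real.rpow_pos_of_pos hs0 _
  have h16 : 1 / s ≤ h0 := by
    rw [div_le_iff₀ hs0]
    have h2 : 4 ≤ h0 ^ 2 * s := by
      have : 4 / h0 ^ 2 ≤ s := by linarith
      rw [div_le_iff₀ (by positivity)] at this; linarith
    nlinarith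
  have h17 := hT (-(1 / s)) (by rw [abs_neg, abs_of_pos (by positivity)]; exact h16)
  have e : uu d a β v = s ^ (-β) * (1 + -(1 / s)) ^ (-β) := by
    rw [← Real.mul_rpow hs0.le (by linarith)]
    unfold uu
    congr 1
    field_simp
    rw [hs]; ring
  rw [e]
  have h18 := (abs_le.1 h17).2
  have h19 := (abs_le.1 key).1
  refine le_trans (b := s ^ (-β) * (1 + β / s + B / s ^ 2)) ?_ ?_
  · apply mul_le_mul_of_nonneg_left _ hsp.le
    have : 0 ≤ (β * (β + 1) / 2 - ε) * (1 / s) ^ 2 := mul_nonneg (by linarith) (sq_nonneg _)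
    have h9 : 0 ≤ β * (β + 1) * (1 / s) ^ 2 := by positivity
    have e5 : β / s = β * (1 / s) := by ring
    have e6 : B / s ^ 2 = 2 * β * (β + 1) * (1 / s) ^ 2 := by rw [hB]; ring
    rw [e5, e6]
    nlinarith
  · have : s ^ (-β) * (1 + β * (β + 1) / 2 * (4 * N d v / s ^ 2) / d -
      (ε * (4 * N d v / s ^ 2) / d)) ≤ avg d (uu d a β) v := by linarith
    refine le_trans (mul_le_mul_of_nonneg_left ?_ hsp.le) this
    have e7 : β * (β + 1) / 2 * (4 * N d v / s ^ 2) / d - (ε * (4 * N d v / s ^ 2) / d) =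
        ((B - 4 * ε) * N d v / d) / s ^ 2 := by rw [hB]; field_simp; ring
    have e8 : β / s + B / s ^ 2 = (β * s + B) / s ^ 2 := by field_simp
    have h10 : β * s + B ≤ (B - 4 * ε) * N d v / d := by
      rw [le_div_iff₀ hd']
      have : B - β * d = κ := by rw [hB, hκ]; ring
      have h11 : 4 * ε * N d v ≤ κ / 2 * N d v := mul_le_mul_of_nonneg_right (by linarith) hN
      have h12 : β * d ≤ B := by linarith
      have h13 : β * d * (a + 1) ≤ B * (a + 1) := mul_le_mul_of_nonneg_right h12 (by linarith)
      have h14 : β * d = B - κ := by linarith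
      have : (β * s + B) * d = β * d * N d v + β * d * (a + 1) + B * d := by rw [hs]; ring
      rw [this, h14]
      rw [h14] at h13
      linarith
    have := div_le_div_of_nonneg_right h10 (by positivity : (0 : ℝ) ≤ s ^ 2)
    linarith

/-! ### Part 4: Green function bounds -/

/-- Euclidean norm. -/
noncomputable def nrm (d : ℕ) (v : Pt d) : ℝ := Real.sqrt (N d v)

lemma nrm_sq (d : ℕ) (v : Pt d) : nrm d v ^ 2 = N d v := Real.sq_sqrt (N_nonneg d v)

lemma nrm_nonneg (d : ℕ) (v : Pt d) : 0 ≤ nrm d v := Real.sqrt_nonneg _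

lemma nrm_eq (d : ℕ) (v : Pt d) :
    nrm d v = ‖(WithLp.toLp 2 (fun i => (v i : ℝ)) : EuclideanSpace ℝ (Fin d))‖ := by
  rw [EuclideanSpace.norm_eq, nrm, N]
  simp

lemma nrm_add (d : ℕ) (v w : Pt d) : nrm d (v + w) ≤ nrm d v + nrm d w := by
  simp only [nrm_eq]
  refine le_trans (le_of_eq ?_) (norm_add_le _ _)
  congr 1
  ext i
  simp

lemma nrm_neg (d : ℕ) (v : Pt d) : nrm d (-v) = nrm d v := by simp [nrm, N]

lemma nrm_sub_comm (d : ℕ) (v w : Pt d) : nrm d (v - w) = nrm d (w - v) := by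
  rw [← nrm_neg, neg_sub]

lemma nrm_tri (d : ℕ) (u v w : Pt d) : nrm d (u - w) ≤ nrm d (u - v) + nrm d (v - w) := by
  have := nrm_add d (u - v) (v - w)
  rwa [sub_add_sub_cancel] at this

lemma dist0_eq (d : ℕ) (x y : Pt d) : dist0 d x y = nrm d (x - y) := by
  simp [dist0, nrm, N]

lemma N_add_smul (d : ℕ) (v : Pt d) (i : Fin d) (t : ℕ) :
    N d (v + (t : ℤ) • ev d i) = N d v + t ^ 2 + 2 * t * v i := by
  unfold N
  rw [← Finset.add_sum_erase _ _ (Finset.mem_univ i),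
    ← Finset.add_sum_erase _ (fun j => (v j : ℝ) ^ 2) (Finset.mem_univ i)]
  have : ∑ j ∈ Finset.univ.erase i, (((v + (t : ℤ) • ev d i) j : ℤ) : ℝ) ^ 2 =
      ∑ j ∈ Finset.univ.erase i, (v j : ℝ) ^ 2 := by
    refine Finset.sum_congr rfl fun j hj => ?_
    have := Finset.ne_of_mem_erase hj
    simp [ev, this]
  rw [this]
  simp [ev]
  ring

lemma nrm_smul_ev (d : ℕ) (i : Fin d) (t : ℕ) : nrm d ((t : ℤ) • ev d i) = t := by
  have := N_add_smul d 0 i t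
  rw [zero_add] at this
  rw [nrm, this]
  have h0 : N d 0 = 0 := by simp [N]
  rw [h0]
  simp

lemma nrm_ev (d : ℕ) (i : Fin d) : nrm d (ev d i) = 1 := by
  simpa using nrm_smul_ev d i 1

lemma finite_ball (d : ℕ) (y : Pt d) (B : ℝ) : {v | N d (v - y) ≤ B}.Finite := by
  obtain ⟨n, hn⟩ := exists_nat_gt B
  refine (Set.finite_Icc (y - fun _ => (n : ℤ)) (y + fun _ => (n : ℤ))).subset ?_
  intro v hv
  have hv : N d (v - y) ≤ B := hv
  have hk : ∀ i, |v i - y i| ≤ (n : ℤ) := by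
    intro i
    have h1 := sq_le_N d (v - y) i
    have h2 : ((v i - y i : ℤ) : ℝ) ^ 2 ≤ (n : ℝ) := by
      have : ((v - y) i : ℤ) = v i - y i := rfl
      rw [this] at h1
      linarith
    have h3 : (v i - y i) ^ 2 ≤ (n : ℤ) := by exact_mod_cast h2
    have h4 : |v i - y i| ≤ (v i - y i) ^ 2 := by
      rw [← sq_abs]
      rcases eq_or_lt_of_le (abs_nonneg (v i - y i)) with h | h
      · rw [← h]; norm_num
      · nlinarith
    linarith
  constructor
  · intro i
    have := (abs_le.1 (hk i)).1
    simp only [Pi.sub_apply]; linarith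
  · intro i
    have := (abs_le.1 (hk i)).2
    simp only [Pi.add_apply]; linarith

lemma single_nonneg (d : ℕ) (y v : Pt d) : (0 : ℝ) ≤ (Pi.single y 1 : Pt d → ℝ) v := by
  by_cases h : v = y
  · subst h; simp
  · simp [h]

lemma uu_nonneg (d : ℕ) (a β : ℝ) (ha : 0 ≤ a) (v : Pt d) : 0 ≤ uu d a β v :=
  Real.rpow_nonneg (by have := N_nonneg d v; linarith) _

lemma uu_zero_pos (d : ℕ) (a β : ℝ) (ha : 0 < a) : 0 < uu d a β 0 :=
  Real.rpow_pos_of_pos (by have := N_nonneg d 0; linarith) _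

lemma green_upper (d : ℕ) (hd : 0 < d) (a β : ℝ) (ha : 1 ≤ a) (hβ : 0 < β)
    (hs : ∀ v, avg d (uu d a β) v ≤ uu d a β v) :
    ∃ K : ℝ, 0 < K ∧ ∀ y, Sup d ∅ (Pi.single y 1) (fun v => K * uu d a β (v - y)) := by
  have h0 : N d 0 = 0 := by simp [N]
  have hlt : avg d (uu d a β) 0 < uu d a β 0 := by
    have h1 : avg d (uu d a β) 0 = avg d (fun _ => (1 + a) ^ (-β)) 0 := by
      unfold avg
      congr 1
      refine Finset.sum_congr rfl fun i _ => ?_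
      unfold uu
      rw [N_add_ev, N_sub_ev, h0]
      simp
    rw [h1, avg_const d hd]
    unfold uu
    rw [h0, zero_add]
    exact Real.rpow_lt_rpow_of_neg (by linarith) (by linarith) (by linarith)
  have hp : 0 < uu d a β 0 - avg d (uu d a β) 0 := by linarith
  have hK : 0 < 1 / (uu d a β 0 - avg d (uu d a β) 0) := by positivity
  refine ⟨1 / (uu d a β 0 - avg d (uu d a β) 0), hK, fun y =>
    ⟨single_nonneg d y, fun v => mul_nonneg hK.le (uu_nonneg d a β (by linarith) _), fun v => ?_⟩⟩
  rw [Qop_empty, avg_smul, avg_translate]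
  by_cases hv : v = y
  · subst hv
    have : 1 / (uu d a β 0 - avg d (uu d a β) 0) * (uu d a β 0 - avg d (uu d a β) 0) = 1 := by
      field_simp
    rw [mul_sub] at this
    simp only [sub_self, Pi.single_eq_same]
    linarith
  · simp only [ne_eq, hv, not_false_eq_true, Pi.single_eq_of_ne, zero_add]
    exact mul_le_mul_of_nonneg_left (hs _) hK.le

lemma pot_step (d : ℕ) (hd : 0 < d) (A : Set (Pt d)) (g φ : Pt d → ℝ) (h : Sup d A g φ)
    (x w : Pt d) (i : Fin d) (hw : w = x + ev d i ∨ w = x - ev d i) (hA : w ∉ A) :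
    (1 / (2 * d : ℝ)) * pot d A g w ≤ pot d A g x := by
  classical
  have hd' : (0 : ℝ) < d := by exact_mod_cast hd
  have hn := pot_nonneg d A g h.1
  rw [pot_eq d A g φ h x, Qop_apply, one_div, ← div_eq_inv_mul]
  have h2 : pot d A g w ≤ ∑ i, ((if x + ev d i ∈ A then 0 else pot d A g (x + ev d i)) +
    (if x - ev d i ∈ A then 0 else pot d A g (x - ev d i))) := by
    have hnn : ∀ v, 0 ≤ (if v ∈ A then 0 else pot d A g v) := by
      intro v; split_ifs
      · exact le_rfl
      · exact hn v
    refine le_trans ?_ (Finset.single_le_sum (f := fun i =>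
      ((if x + ev d i ∈ A then 0 else pot d A g (x + ev d i)) +
      (if x - ev d i ∈ A then 0 else pot d A g (x - ev d i))))
      (fun j _ => add_nonneg (hnn _) (hnn _)) (Finset.mem_univ i))
    rcases hw with hw | hw
    · have := hnn (x - ev d i)
      simp only [← hw, hA, if_false]
      linarith
    · have := hnn (x + ev d i)
      simp only [← hw, hA, if_false]
      linarith
  have := div_le_div_of_nonneg_right h2 (by positivity : (0 : ℝ) ≤ 2 * d)
  linarith [h.1 x]

lemma green_pos (d : ℕ) (hd : 0 < d) (y : Pt d) (φ : Pt d → ℝ) (h : Sup d ∅ (Pi.single y 1) φ)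
    (k : ℕ) : ∀ v : Pt d, ∑ i, (v i - y i).natAbs = k →
      (1 / (2 * d : ℝ)) ^ k ≤ pot d ∅ (Pi.single y 1) v := by
  have hd' : (0 : ℝ) < d := by exact_mod_cast hd
  induction k with
  | zero =>
    intro v hv
    have : v = y := by
      funext i
      have := (Finset.sum_eq_zero_iff.1 hv) i (Finset.mem_univ i)
      omega
    subst this
    rw [pot_eq d ∅ _ φ h]
    have := Qop_nonneg d ∅ (pot_nonneg d ∅ _ h.1) v
    simp only [pow_zero, Pi.single_eq_same]
    linarith
  | succ k ih =>
    intro v hv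
    obtain ⟨i, hi⟩ : ∃ i, v i - y i ≠ 0 := by
      by_contra hcon
      push Not at hcon
      simp [hcon] at hv
    have hstep : ∀ w : Pt d, (w i - y i).natAbs + 1 = (v i - y i).natAbs →
        (∀ j, j ≠ i → w j = v j) → ∑ j, (w j - y j).natAbs = k := by
      intro w h1 h2
      rw [← Finset.add_sum_erase _ _ (Finset.mem_univ i)] at hv ⊢
      have : ∑ j ∈ Finset.univ.erase i, (w j - y j).natAbs =
          ∑ j ∈ Finset.univ.erase i, (v j - y j).natAbs := by
        refine Finset.sum_congr rfl fun j hj => ?_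
        rw [h2 j (Finset.ne_of_mem_erase hj)]
      omega
    rw [pow_succ']
    rcases lt_or_gt_of_ne hi with hlt | hgt
    · refine le_trans ?_ (pot_step d hd ∅ _ φ h v (v + ev d i) i (Or.inl rfl) (by simp))
      apply mul_le_mul_of_nonneg_left _ (by positivity)
      apply ih
      apply hstep
      · simp [ev]; omega
      · intro j hj; simp [ev, hj]
    · refine le_trans ?_ (pot_step d hd ∅ _ φ h v (v - ev d i) i (Or.inr rfl) (by simp))
      apply mul_le_mul_of_nonneg_left _ (by positivity)
      apply ih
      apply hstep
      · simp [ev]; omega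
      · intro j hj; simp [ev, hj]

open Filter in
lemma green_lower (d : ℕ) (hd : 0 < d) (β : ℝ) (hβ : 0 < β) (hβd : (d : ℝ) < 2 * (β + 1))
    (φ : Pt d → Pt d → ℝ) (h : ∀ y, Sup d ∅ (Pi.single y 1) (φ y)) :
    ∃ c : ℝ, 0 < c ∧ ∀ y v, c * uu d 1 β (v - y) ≤ pot d ∅ (Pi.single y 1) v := by
  have hd' : (0 : ℝ) < d := by exact_mod_cast hd
  obtain ⟨R, hR1, hR⟩ := sub_uu d hd 1 β zero_le_one hβ hβd
  obtain ⟨n, hn⟩ := exists_nat_gt R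
  have hcp : 0 < (1 / (2 * d : ℝ)) ^ n := by positivity
  refine ⟨(1 / (2 * d : ℝ)) ^ n, hcp, fun y v => ?_⟩
  set c := (1 / (2 * d : ℝ)) ^ n with hc
  have hle1 : ∀ v, uu d 1 β v ≤ 1 := by
    intro v
    have := N_nonneg d v
    exact Real.rpow_le_one_of_one_le_of_nonpos (by linarith) (by linarith)
  have key := maxp d hd (fun v => c * uu d 1 β (v - y) - pot d ∅ (Pi.single y 1) v) ?_ ?_ v
  · simpa using key
  · intro v hv
    beta_reduce at hv ⊢
    by_cases hN : R ≤ N d (v - y)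
    · rw [avg_sub, avg_smul, avg_translate, pot_eq d ∅ _ _ (h y) v, Qop_empty]
      have h1 := hR _ hN
      have h2 := single_nonneg d y v
      have h3 := mul_le_mul_of_nonneg_left h1 hcp.le
      linarith
    · exfalso
      push Not at hN
      have h1 := green_pos d hd y _ (h y) _ v rfl
      have h2 : ∑ i, (v i - y i).natAbs ≤ n := by
        have h3 : ((∑ i, (v i - y i).natAbs : ℕ) : ℝ) ≤ N d (v - y) := by
          unfold N
          push_cast
          refine Finset.sum_le_sum fun i _ => ?_
          have : (v - y) i = v i - y i := rfl
          rw [this]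
          have h4 : |v i - y i| ≤ (v i - y i) ^ 2 := by
            rw [← sq_abs]
            rcases eq_or_lt_of_le (abs_nonneg (v i - y i)) with h | h
            · rw [← h]; norm_num
            · nlinarith
          have h5 : ((v i - y i).natAbs : ℝ) = ((|v i - y i| : ℤ) : ℝ) := by
            rw [Nat.cast_natAbs]
          have h6 : (((|v i - y i| : ℤ)) : ℝ) ≤ (((v i - y i) ^ 2 : ℤ) : ℝ) := by exact_mod_cast h4
          rw [h5] 
          simpa using h6
        have : ((∑ i, (v i - y i).natAbs : ℕ) : ℝ) < n := by linarith
        exact_mod_cast this.le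
      have h7 : c ≤ (1 / (2 * d : ℝ)) ^ (∑ i, (v i - y i).natAbs) := by
        apply pow_le_pow_of_le_one (by positivity) _ h2
        rw [div_le_one (by positivity)]
        have : (1 : ℝ) ≤ d := by exact_mod_cast hd
        linarith
      have h8 : c * uu d 1 β (v - y) ≤ c := by nlinarith [hle1 (v - y)]
      linarith
  · intro ε hε
    have ht := (tendsto_rpow_neg_atTop hβ).eventually (gt_mem_nhds (div_pos hε hcp))
    obtain ⟨B, hB⟩ := eventually_atTop.1 ht
    refine (finite_ball d y B).subset ?_
    intro v hv
    have hv : ε < c * uu d 1 β (v - y) - pot d ∅ (Pi.single y 1) v := hv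
    show N d (v - y) ≤ B
    by_contra hcon
    push Not at hcon
    have h1 := hB (N d (v - y) + 1) (by linarith)
    rw [lt_div_iff₀ hcp] at h1
    have h2 := pot_nonneg d ∅ _ (h y).1 v
    have : uu d 1 β (v - y) = (N d (v - y) + 1) ^ (-β) := rfl
    rw [this] at hv
    linarith

lemma good_dir (d : ℕ) (hd : 3 ≤ d) (A : Finset (Pt d)) (hA : A.card ≤ 2) (x : Pt d) :
    ∃ k : Fin d, ∀ a ∈ A, 2 * ((x - a) k : ℝ) ^ 2 ≤ N d (x - a) := by
  classical
  by_contra hcon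
  push Not at hcon
  have hbad : ∀ a ∈ A, (Finset.univ.filter
      (fun k : Fin d => N d (x - a) < 2 * ((x - a) k : ℝ) ^ 2)).card ≤ 1 := by
    intro a _
    rw [Finset.card_le_one]
    intro i hi j hj
    simp only [Finset.mem_filter, Finset.mem_univ, true_and] at hi hj
    by_contra hij
    have : ((x - a) i : ℝ) ^ 2 + ((x - a) j : ℝ) ^ 2 ≤ N d (x - a) := by
      have := Finset.sum_le_sum_of_subset_of_nonneg (f := fun k => ((x - a) k : ℝ) ^ 2)
        (Finset.subset_univ {i, j}) (fun k _ _ => sq_nonneg _)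
      rwa [Finset.sum_pair hij] at this
    linarith
  have hcov : (Finset.univ : Finset (Fin d)) ⊆ A.biUnion (fun a => Finset.univ.filter
      (fun k : Fin d => N d (x - a) < 2 * ((x - a) k : ℝ) ^ 2)) := by
    intro k _
    obtain ⟨a, ha, h⟩ := hcon k
    simp only [Finset.mem_biUnion, Finset.mem_filter, Finset.mem_univ, true_and]
    exact ⟨a, ha, h⟩
  have h1 := Finset.card_le_card hcov
  have h2 := Finset.card_biUnion_le_card_mul A _ 1 hbad
  rw [Finset.card_univ, Fintype.card_fin] at h1
  omega

lemma good_dir_dist (d : ℕ) (x a : Pt d) (k : Fin d) (h : 2 * ((x - a) k : ℝ) ^ 2 ≤ N d (x - a))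
    (t : ℕ) : (t : ℝ) ^ 2 / 2 ≤ N d (x + (t : ℤ) • ev d k - a) := by
  have : x + (t : ℤ) • ev d k - a = (x - a) + (t : ℤ) • ev d k := by abel
  rw [this, N_add_smul]
  nlinarith [sq_nonneg ((t : ℝ) + 2 * ((x - a) k : ℝ))]

/-- following a straight path -/
lemma pot_path (d : ℕ) (hd : 0 < d) (A : Set (Pt d)) (g φ : Pt d → ℝ) (h : Sup d A g φ)
    (x : Pt d) (k : Fin d) (T : ℕ) (hA : ∀ t : ℕ, 1 ≤ t → t ≤ T → x + (t : ℤ) • ev d k ∉ A) :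
    (1 / (2 * d : ℝ)) ^ T * pot d A g (x + (T : ℤ) • ev d k) ≤ pot d A g x := by
  induction T with
  | zero => simp
  | succ T ih =>
    refine le_trans ?_ (ih fun t h1 h2 => hA t h1 (by omega))
    rw [pow_succ, mul_assoc]
    apply mul_le_mul_of_nonneg_left _ (by positivity)
    refine pot_step d hd A g φ h _ _ k (Or.inl ?_) (hA (T + 1) (by omega) le_rfl)
    push_cast
    rw [add_smul, one_smul, add_assoc]

/-- Escaping to a sphere. -/
lemma escape_lb (d : ℕ) (hd : 0 < d) (A : Set (Pt d)) (g φ : Pt d → ℝ) (h : Sup d A g φ)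
    (s : Pt d → ℝ) (hs1 : ∀ v, s v ≤ 1) (hsA : ∀ v ∈ A, s v ≤ 0) (hsub : ∀ v, s v ≤ avg d s v)
    (o : Pt d) (L m : ℝ) (hm : 0 ≤ m)
    (hshell : ∀ w, L ≤ nrm d (w - o) → nrm d (w - o) ≤ L + 1 → w ∉ A → m ≤ pot d A g w)
    (x : Pt d) (hx : nrm d (x - o) < L) (hxA : x ∉ A) : m * s x ≤ pot d A g x := by
  classical
  have key := maxp d hd (fun v => if nrm d (v - o) < L then
    m * s v - (if v ∈ A then 0 else pot d A g v) else 0) ?_ ?_ x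
  · simp only [hx, hxA, if_true, if_false] at key
    linarith
  · intro v hv
    by_cases hB : nrm d (v - o) < L
    · simp only [hB, if_true] at hv
      have hvA : v ∉ A := by
        intro hvA
        simp only [hvA, if_true] at hv
        nlinarith [hsA v hvA]
      have hnb : ∀ w, nrm d (w - v) = 1 → m * s w - (if w ∈ A then 0 else pot d A g w) ≤
          if nrm d (w - o) < L then
            m * s w - (if w ∈ A then 0 else pot d A g w) else 0 := by
        intro w hw
        by_cases h1 : nrm d (w - o) < L
        · simp only [h1, if_true]; exact le_rfl
        simp only [h1, if_false]
        by_cases h2 : w ∈ A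
        · simp only [h2, if_true]; nlinarith [hsA w h2]
        · simp only [h2, if_false]
          push Not at h1
          have h3 := nrm_tri d w v o
          have h4 := hshell w (by linarith) (by linarith) h2
          nlinarith [hs1 w]
      have h1 : m * s v - pot d A g v ≤
          avg d (fun v => m * s v - (if v ∈ A then 0 else pot d A g v)) v := by
        rw [avg_sub, avg_smul, ← Qop_eq_avg, pot_eq d A g φ h v]
        have := mul_le_mul_of_nonneg_left (hsub v) hm
        linarith [h.1 v]
      simp only [hB, hvA, if_true, if_false]
      refine h1.trans (avg_mono d v (fun i => hnb _ ?_) (fun i => hnb _ ?_))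
      · rw [add_sub_cancel_left, nrm_ev]
      · rw [sub_sub_cancel_left, nrm_neg, nrm_ev]
    · simp only [hB, if_false] at hv
      exact absurd hv (lt_irrefl _)
  · intro ε hε
    refine (finite_ball d o (L ^ 2)).subset ?_
    intro v hv
    by_cases hB : nrm d (v - o) < L
    · show N d (v - o) ≤ L ^ 2
      rw [← nrm_sq]
      have := nrm_nonneg d (v - o)
      gcongr
    · have hv : ε < (if nrm d (v - o) < L then
        m * s v - (if v ∈ A then 0 else pot d A g v) else 0) := hv
      simp only [hB, if_false] at hv
      linarith

/-! ### Part 5: lower bound for the killed Green function -/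

/-- A superharmonic function dominating the indicator of `O`. -/
noncomputable def hpot (d : ℕ) (a β : ℝ) (O : Finset (Pt d)) (v : Pt d) : ℝ :=
  ∑ z ∈ O, (1 / uu d a β 0) * uu d a β (v - z)

lemma hpot_nonneg (d : ℕ) (a β : ℝ) (ha : 0 ≤ a) (O : Finset (Pt d)) (v : Pt d) :
    0 ≤ hpot d a β O v :=
  Finset.sum_nonneg fun z _ => mul_nonneg (one_div_nonneg.2 (uu_nonneg d a β ha 0))
    (uu_nonneg d a β ha _)

lemma hpot_ge_one (d : ℕ) (a β : ℝ) (ha : 0 < a) (O : Finset (Pt d)) (v : Pt d) (hv : v ∈ O) :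
    1 ≤ hpot d a β O v := by
  have h := Finset.single_le_sum (f := fun z => (1 / uu d a β 0) * uu d a β (v - z))
    (fun z _ => mul_nonneg (one_div_nonneg.2 (uu_nonneg d a β ha.le 0))
      (uu_nonneg d a β ha.le _)) hv
  refine le_trans (le_of_eq ?_) h
  have := uu_zero_pos d a β ha
  simp only [sub_self]
  field_simp

lemma hpot_super (d : ℕ) (a β : ℝ) (ha : 0 ≤ a) (hs : ∀ v, avg d (uu d a β) v ≤ uu d a β v)
    (O : Finset (Pt d)) (v : Pt d) : avg d (hpot d a β O) v ≤ hpot d a β O v := by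
  have : hpot d a β O = fun v => ∑ z ∈ O, (fun z v => (1 / uu d a β 0) * uu d a β (v - z)) z v := rfl
  rw [this, avg_sum]
  refine Finset.sum_le_sum fun z _ => ?_
  simp only
  rw [avg_smul, avg_translate]
  exact mul_le_mul_of_nonneg_left (hs _) (one_div_nonneg.2 (uu_nonneg d a β ha 0))

lemma uu_le (d : ℕ) (a β B : ℝ) (hβ : 0 < β) (hB : 0 < B) (v : Pt d) (h : B ≤ N d v + a) :
    uu d a β v ≤ B ^ (-β) :=
  Real.rpow_le_rpow_of_nonpos hB h (by linarith)

lemma hpot_le (d : ℕ) (a β B : ℝ) (ha : 0 < a) (hβ : 0 < β) (hB : 0 < B) (O : Finset (Pt d))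
    (n : ℝ) (hn : (O.card : ℝ) ≤ n)
    (v : Pt d) (h : ∀ z ∈ O, B ≤ N d (v - z) + a) :
    hpot d a β O v ≤ n * (B ^ (-β) / uu d a β 0) := by
  have h0 := uu_zero_pos d a β ha
  have h1 : hpot d a β O v ≤ ∑ z ∈ O, B ^ (-β) / uu d a β 0 := by
    refine Finset.sum_le_sum fun z hz => ?_
    rw [one_div, ← div_eq_inv_mul]
    exact div_le_div_of_nonneg_right (uu_le d a β B hβ hB _ (h z hz)) h0.le
  rw [Finset.sum_const, nsmul_eq_mul] at h1
  exact h1.trans (mul_le_mul_of_nonneg_right hn (by positivity))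

lemma LB2 (d : ℕ) (hd : 3 ≤ d) (a β : ℝ) (ha : 0 < a) (hβ : 0 < β)
    (hs : ∀ v, avg d (uu d a β) v ≤ uu d a β v) (K : ℕ)
    (hK : 2 * (((K : ℝ) ^ 2 / 2 + a) ^ (-β) / uu d a β 0) ≤ 1 / 2)
    (A : Finset (Pt d)) (hA : A.card ≤ 2) (g φ : Pt d → ℝ) (h : Sup d (↑A) g φ)
    (o : Pt d) (L m : ℝ) (hm : 0 ≤ m)
    (hshell : ∀ w, L ≤ nrm d (w - o) → nrm d (w - o) ≤ L + 1 → w ∉ A → m ≤ pot d (↑A) g w)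
    (x : Pt d) (hx : nrm d (x - o) + K < L) (hxA : x ∉ A) :
    (1 / (2 * d : ℝ)) ^ K * (m / 2) ≤ pot d (↑A) g x := by
  obtain ⟨k, hk⟩ := good_dir d hd A hA x
  have hav : ∀ t : ℕ, x + (t : ℤ) • ev d k ∉ A := by
    intro t ht
    rcases Nat.eq_zero_or_pos t with h0 | h0
    · subst h0; simp at ht; exact hxA ht
    · have h1 := good_dir_dist d x _ k (hk _ ht) t
      rw [sub_self] at h1
      have h2 : N d 0 = 0 := by simp [N]
      rw [h2] at h1
      have : (0 : ℝ) < t := by exact_mod_cast h0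
      nlinarith
  refine le_trans ?_ (pot_path d (by omega) (↑A) g φ h x k K (fun t _ _ => by simpa using hav t))
  apply mul_le_mul_of_nonneg_left _ (by positivity)
  have hesc := escape_lb d (by omega) (↑A) g φ h (fun v => 1 - hpot d a β A v)
    (fun v => by linarith [hpot_nonneg d a β ha.le A v])
    (fun v hv => by linarith [hpot_ge_one d a β ha A v (by simpa using hv)])
    (fun v => by
      rw [avg_sub, avg_const d (by omega)]
      have := hpot_super d a β ha.le hs A v
      have e : avg d (fun v => hpot d a β A v) v = avg d (hpot d a β A) v := rfl
      rw [e]; linarith) o L m hm (fun w h1 h2 h3 => hshell w h1 h2 (by simpa using h3))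
    (x + (K : ℤ) • ev d k) ?_ (by simpa using hav K)
  · refine le_trans ?_ hesc
    have h1 := hpot_le d a β ((K : ℝ) ^ 2 / 2 + a) ha hβ (by positivity) A 2 (by exact_mod_cast hA)
      (x + (K : ℤ) • ev d k) (fun z hz => by linarith [good_dir_dist d x z k (hk z hz) K])
    have : 1 / 2 ≤ 1 - hpot d a β A (x + (K : ℤ) • ev d k) := by linarith
    calc m / 2 = m * (1 / 2) := by ring
      _ ≤ _ := mul_le_mul_of_nonneg_left this hm
  · have e : x + (K : ℤ) • ev d k - o = (x - o) + (K : ℤ) • ev d k := by abel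
    rw [e]
    have := nrm_add d (x - o) ((K : ℤ) • ev d k)
    rw [nrm_smul_ev] at this
    linarith

open Filter in
lemma choose_K (a β u0 : ℝ) (hβ : 0 < β) (hu : 0 < u0) :
    ∃ K : ℕ, 2 * (((K : ℝ) ^ 2 / 2 + a) ^ (-β) / u0) ≤ 1 / 2 := by
  have ht := (tendsto_rpow_neg_atTop hβ).eventually (gt_mem_nhds (by positivity : 0 < u0 / 4))
  obtain ⟨B, hB⟩ := eventually_atTop.1 ht
  obtain ⟨n, hn⟩ := exists_nat_gt (max (2 * (B - a)) 1)
  have h1 := (le_max_left (2 * (B - a)) 1).trans hn.le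
  have h2 := (le_max_right (2 * (B - a)) 1).trans hn.le
  refine ⟨n, ?_⟩
  have := hB ((n : ℝ) ^ 2 / 2 + a) (by nlinarith)
  have h3 : ((n : ℝ) ^ 2 / 2 + a) ^ (-β) / u0 ≤ 1 / 4 := by
    rw [div_le_iff₀ hu]; linarith
  linarith

open Filter in
lemma choose_X (β β' E F : ℝ) (hb : β' < 2 * β) (hE : 0 < E) (hF : 0 < F) :
    ∃ X0 : ℝ, 1 ≤ X0 ∧ ∀ X, X0 ≤ X →
      E * ((X / 4) ^ (-β) * (X / 4) ^ (-β)) ≤ F * (32 * X) ^ (-β') := by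
  have hpos : 0 < F * 32 ^ (-β') / (E * ((1 / 4) ^ (-β) * (1 / 4) ^ (-β))) := by positivity
  have ht := (tendsto_rpow_neg_atTop (by linarith : 0 < 2 * β - β')).eventually
    (gt_mem_nhds hpos)
  obtain ⟨B, hB⟩ := eventually_atTop.1 ht
  refine ⟨max B 1, le_max_right _ _, fun X hX => ?_⟩
  have hX1 : 1 ≤ X := (le_max_right _ _).trans hX
  have hX0 : 0 < X := by linarith
  have h1 := hB X ((le_max_left _ _).trans hX)
  rw [lt_div_iff₀ (by positivity)] at h1
  have e1 : (X / 4) ^ (-β) = X ^ (-β) * (1 / 4) ^ (-β) := by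
    rw [← Real.mul_rpow hX0.le (by norm_num)]; congr 1; ring
  have e2 : (32 * X) ^ (-β') = 32 ^ (-β') * X ^ (-β') := by
    rw [Real.mul_rpow (by norm_num) hX0.le]
  have e3 : X ^ (-β) * X ^ (-β) = X ^ (-(2 * β - β')) * X ^ (-β') := by
    rw [← Real.rpow_add hX0, ← Real.rpow_add hX0]; congr 1; ring
  have hx : 0 < X ^ (-β') := by positivity
  rw [e1, e2]
  calc E * (X ^ (-β) * (1 / 4) ^ (-β) * (X ^ (-β) * (1 / 4) ^ (-β)))
      = (X ^ (-β) * X ^ (-β)) * (E * ((1 / 4) ^ (-β) * (1 / 4) ^ (-β))) := by ring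
    _ = (X ^ (-(2 * β - β')) * (E * ((1 / 4) ^ (-β) * (1 / 4) ^ (-β)))) * X ^ (-β') := by
      rw [e3]; ring
    _ ≤ (F * 32 ^ (-β')) * X ^ (-β') := mul_le_mul_of_nonneg_right h1.le hx.le
    _ = _ := by ring

lemma main_lb (d : ℕ) (hd : 3 ≤ d) (a β β' Kg : ℝ) (ha : 1 ≤ a) (hβ : 0 < β) (hβ' : 0 < β')
    (hbb : β' < 2 * β) (hβd : (d : ℝ) < 2 * (β' + 1))
    (hs : ∀ v, avg d (uu d a β) v ≤ uu d a β v) (hKg : 0 < Kg)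
    (hG : ∀ y, Sup d ∅ (Pi.single y 1) (fun v => Kg * uu d a β (v - y))) :
    ∃ c : ℝ, 0 < c ∧ ∀ (A : Finset (Pt d)) (x y : Pt d) (D : ℝ), A.card ≤ 2 → x ∉ A → y ∉ A →
      1 ≤ D → (∀ z ∈ A, nrm d (z - x) ≤ D) → nrm d (y - x) ≤ D + 1 →
      c * D ^ (-(2 * β')) ≤ pot d (↑A) (Pi.single y 1) x := by
  have hd0 : (0 : ℝ) < d := by exact_mod_cast (by omega : 0 < d)
  have ha0 : 0 < a := by linarith
  have hu0 := uu_zero_pos d a β ha0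
  obtain ⟨c0, hc0, hlow⟩ := green_lower d (by omega) β' hβ' hβd _ hG
  obtain ⟨K, hK⟩ := choose_K a β (uu d a β 0) hβ hu0
  obtain ⟨X0, hX01, hX0⟩ := choose_X β β' (Kg * (2 / uu d a β 0)) (c0 / 2) hbb (by positivity)
    (by positivity)
  set K2 : ℝ := max X0 (K + 4) with hK2
  have hK2a : X0 ≤ K2 := le_max_left _ _
  have hK2b : (K : ℝ) + 4 ≤ K2 := le_max_right _ _
  have hKn : (0 : ℝ) ≤ K := Nat.cast_nonneg K
  have hK2p : 0 < K2 := by linarith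
  refine ⟨(1 / (2 * d : ℝ)) ^ K * ((1 / (2 * d : ℝ)) ^ K * (c0 / 2 * (32 * K2 ^ 2) ^ (-β') / 2) / 2),
    by positivity, fun A x y D hA hxA hyA hD hAD hyD => ?_⟩
  set L := K2 * D with hL
  have hLD : (K : ℝ) + 4 * D ≤ L := by nlinarith
  have hL1 : X0 ≤ L := by nlinarith
  have hL0 : 0 < L := by linarith
  have hLX : X0 ≤ L ^ 2 := by nlinarith
  set m1 : ℝ := c0 / 2 * (32 * L ^ 2) ^ (-β') with hm1
  have hm1p : 0 ≤ m1 := by positivity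
  have hsup : ∀ z, Sup d (↑A) (Pi.single z 1) (fun v => Kg * uu d a β (v - z)) := fun z =>
    Sup_anti d (Set.empty_subset _) _ _ (hG z)
  have hfar : ∀ w, L ≤ nrm d (w - x) → ∀ z ∈ A, L ^ 2 / 4 ≤ N d (w - z) := by
    intro w hw z hz
    have h1 := nrm_tri d w z x
    have h2 := hAD z hz
    rw [← nrm_sq]
    nlinarith
  have hcmp : ∀ w w', L ≤ nrm d (w - x) → nrm d (w - x) ≤ L + 1 → L ≤ nrm d (w' - x) →
      nrm d (w' - x) ≤ L + 1 → m1 ≤ pot d (↑A) (Pi.single w 1) w' := by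
    intro w w' h1 h2 h3 h4
    have hc := pot_compare d (Set.empty_subset (↑A : Set (Pt d))) (Pi.single w 1) _ (hpot d a β A)
      (hG w) (Kg * (L ^ 2 / 4) ^ (-β)) (by positivity) (hpot_nonneg d a β ha0.le A)
      (fun v hv _ => hpot_ge_one d a β ha0 A v (by simpa using hv))
      (hpot_super d a β ha0.le hs A)
      (fun v hv _ => (pot_le d ∅ _ _ (hG w) v).trans
        (mul_le_mul_of_nonneg_left (uu_le d a β _ hβ (by positivity) _ (by
          have := hfar w h1 v (by simpa using hv)
          rw [← nrm_sq, nrm_sub_comm, nrm_sq] at this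
          linarith)) hKg.le)) w'
    have hp := hpot_le d a β (L ^ 2 / 4) ha0 hβ (by positivity) A 2 (by exact_mod_cast hA) w'
      (fun z hz => by linarith [hfar w' h3 z hz])
    have hl := hlow w w'
    have hN : N d (w' - w) + 1 ≤ 32 * L ^ 2 := by
      have t1 := nrm_tri d w' x w
      rw [nrm_sub_comm d x w] at t1
      have t2 := nrm_nonneg d (w' - w)
      rw [← nrm_sq]
      nlinarith
    have hu : (32 * L ^ 2) ^ (-β') ≤ uu d 1 β' (w' - w) :=
      Real.rpow_le_rpow_of_nonpos (by have := N_nonneg d (w' - w); linarith) hN (by linarith)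
    have hX := hX0 (L ^ 2) hLX
    have h5 : Kg * (L ^ 2 / 4) ^ (-β) * hpot d a β A w' ≤ c0 / 2 * (32 * L ^ 2) ^ (-β') := by
      refine le_trans (mul_le_mul_of_nonneg_left hp (by positivity)) (le_trans (le_of_eq ?_) hX)
      ring
    have h6 := mul_le_mul_of_nonneg_left hu hc0.le
    rw [hm1]
    linarith
  have hlb1 : ∀ w, L ≤ nrm d (w - x) → nrm d (w - x) ≤ L + 1 → w ∉ A →
      (1 / (2 * d : ℝ)) ^ K * (m1 / 2) ≤ pot d (↑A) (Pi.single y 1) w := by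
    intro w h1 h2 hw
    rw [pot_symm d (↑A) w y (by simpa using hw) (by simpa using hyA)]
    exact LB2 d hd a β ha0 hβ hs K hK A hA _ _ (hsup w) x L m1 hm1p
      (fun w' h3 h4 _ => hcmp w w' h1 h2 h3 h4) y (by linarith) hyA
  have hfin := LB2 d hd a β ha0 hβ hs K hK A hA _ _ (hsup y) x L _ (by positivity) hlb1 x
    (by
      have : nrm d (x - x) = 0 := by simp [nrm, N]
      rw [this]; linarith) hxA
  refine le_trans (le_of_eq ?_) hfin
  have e : (32 * L ^ 2) ^ (-β') = (32 * K2 ^ 2) ^ (-β') * D ^ (-(2 * β')) := by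
    have : 32 * L ^ 2 = 32 * K2 ^ 2 * D ^ 2 := by rw [hL]; ring
    rw [this, Real.mul_rpow (by positivity) (by positivity)]
    congr 1
    rw [← Real.rpow_natCast D 2, ← Real.rpow_mul (by linarith)]
    congr 1
    push_cast; ring
  rw [hm1, e]
  ring

/-! ### Part 6: comparison of the transport probabilities -/

lemma Sup_mw (d : ℕ) (hd : 0 < d) (W : Set (Pt d)) : Sup d W (mw d W) (fun _ => 1) := by
  refine ⟨mw_nonneg d W, fun _ => zero_le_one, fun x => ?_⟩
  have := mw_add_Qop_le d W (f := fun _ => 1) (fun _ _ => le_rfl) x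
  rwa [avg_const d hd] at this

lemma retProb_nonneg (d : ℕ) (W : Set (Pt d)) (x : Pt d) : 0 ≤ retProb d W x := by
  rw [retProb_eq]
  exact pot_nonneg d W _ (mw_nonneg d W) x

lemma hitFrom_nonneg (d : ℕ) (W : Set (Pt d)) (x y : Pt d) : 0 ≤ hitFrom d W x y := by
  rw [hitFrom_eq]
  exact mul_nonneg (mw_nonneg d W y) (pot_nonneg d W _ (single_nonneg d y) x)

lemma transP_nonneg (d : ℕ) (W : Set (Pt d)) (x y : Pt d) : 0 ≤ transP d W x y :=
  div_nonneg (hitFrom_nonneg d W x y) (retProb_nonneg d W x)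

lemma hit_le_ret (d : ℕ) (hd : 0 < d) (W : Set (Pt d)) (x y : Pt d) (hy : 0 < mw d W y) :
    hitFrom d W x y ≤ retProb d W x := by
  rw [hitFrom_eq, retProb_eq]
  have hS : Sup d W (Pi.single y 1) (fun v => 1 / mw d W y * pot d W (mw d W) v) := by
    refine ⟨single_nonneg d y, fun v => mul_nonneg (by positivity)
      (pot_nonneg d W _ (mw_nonneg d W) v), fun v => ?_⟩
    have e : (fun v => 1 / mw d W y * pot d W (mw d W) v) = (1 / mw d W y) • pot d W (mw d W) := by
      funext v; simp
    rw [e, map_smul, Pi.smul_apply, Pi.smul_apply, smul_eq_mul, smul_eq_mul,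
      pot_eq d W _ _ (Sup_mw d hd W) v, mul_add]
    have : (Pi.single y 1 : Pt d → ℝ) v ≤ 1 / mw d W y * mw d W v := by
      by_cases hv : v = y
      · subst hv
        rw [Pi.single_eq_same]
        apply le_of_eq; field_simp
      · rw [Pi.single_eq_of_ne hv]
        exact mul_nonneg (by positivity) (mw_nonneg d W v)
    linarith
  have := pot_le d W _ _ hS x
  calc mw d W y * pot d W (Pi.single y 1) x
      ≤ mw d W y * (1 / mw d W y * pot d W (mw d W) x) :=
        mul_le_mul_of_nonneg_left this hy.le
    _ = pot d W (mw d W) x := by field_simp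

lemma ret_le (d : ℕ) (hd : 0 < d) (A O : Set (Pt d)) (h : Pt d → ℝ) (h0 : ∀ v, 0 ≤ h v)
    (h1 : ∀ v ∈ O, 1 ≤ h v) (h2 : ∀ v, avg d h v ≤ h v) (x : Pt d) :
    retProb d (A ∪ O) x ≤ retProb d A x + h x := by
  rw [retProb_eq, retProb_eq]
  refine pot_le d (A ∪ O) _ (pot d A (mw d A) + h) ⟨mw_nonneg d _, fun v => ?_, fun v => ?_⟩ x
  · exact add_nonneg (pot_nonneg d A _ (mw_nonneg d A) v) (h0 v)
  · rw [map_add, Pi.add_apply, Pi.add_apply, pot_eq d A _ _ (Sup_mw d hd A) v]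
    have a1 := mw_union_le d A O v
    have a2 := Qop_anti d (Set.subset_union_left (s := A) (t := O))
      (pot_nonneg d A _ (mw_nonneg d A)) v
    have a3 := Qop_anti d (Set.subset_union_right (s := A) (t := O)) h0 v
    have a4 := mw_add_Qop_le d O h1 v
    linarith [h2 v]

lemma trans_cmp (d : ℕ) (hd : 0 < d) (A O : Set (Pt d)) (ψ h : Pt d → ℝ) (x y : Pt d)
    (hψ : Sup d A (Pi.single y 1) ψ) (h0 : ∀ v, 0 ≤ h v)
    (h1 : ∀ v ∈ O, 1 ≤ h v) (h2 : ∀ v, avg d h v ≤ h v) (M η : ℝ) (hM : 0 ≤ M)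
    (hb : ∀ v, pot d A (Pi.single y 1) v ≤ M) (hη : 0 ≤ η)
    (hmw : 1 / (2 * d : ℝ) ≤ mw d A y) (hG : 0 < pot d A (Pi.single y 1) x)
    (e1 : M * h x ≤ η * pot d A (Pi.single y 1) x)
    (e2 : 2 * d * h x ≤ η * pot d A (Pi.single y 1) x) :
    (1 - 2 * η) * transP d A x y ≤ transP d (A ∪ O) x y := by
  have hd0 : (0 : ℝ) < d := by exact_mod_cast hd
  have hmA : 0 < mw d A y := lt_of_lt_of_le (by positivity) hmw
  have hmAW := mw_mono d (Set.subset_union_left (s := A) (t := O)) y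
  rcases le_or_gt (1 - 2 * η) 0 with hle | hgt
  · exact (mul_nonpos_of_nonpos_of_nonneg hle (transP_nonneg d A x y)).trans
      (transP_nonneg d _ x y)
  have hret := ret_le d hd A O h h0 h1 h2 x
  have hcmp := pot_compare d (Set.subset_union_left (s := A) (t := O)) _ ψ h hψ M hM h0
    (fun v hv hvA => h1 v (hv.resolve_left hvA)) h2 (fun v _ _ => hb v) x
  set G := pot d A (Pi.single y 1) x with hGdef
  have hitA := hitFrom_eq d A x y
  have hitW := hitFrom_eq d (A ∪ O) x y
  have hr1 := hit_le_ret d hd A x y hmA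
  have hr2 := hit_le_ret d hd (A ∪ O) x y (by linarith)
  set GW := pot d (A ∪ O) (Pi.single y 1) x with hGW
  have hGWl : G * (1 - η) ≤ GW := by linarith
  have hGW0 : 0 < G * (1 - η) := mul_pos hG (by linarith)
  have hhitW : mw d A y * (G * (1 - η)) ≤ hitFrom d (A ∪ O) x y := by
    rw [hitW]
    exact mul_le_mul hmAW hGWl hGW0.le (by linarith)
  have hhitWp : 0 < mw d A y * (G * (1 - η)) := mul_pos hmA hGW0
  have hRA : 1 / (2 * d : ℝ) * G ≤ retProb d A x := by
    refine le_trans ?_ hr1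
    rw [hitA]
    exact mul_le_mul_of_nonneg_right hmw hG.le
  have hRAp : 0 < retProb d A x := lt_of_lt_of_le (by positivity) hRA
  have hhx : h x ≤ η * retProb d A x := by
    have t : h x ≤ η * (1 / (2 * d : ℝ) * G) := by
      have : η * (1 / (2 * d : ℝ) * G) = (η * G) / (2 * d) := by field_simp
      rw [this, le_div_iff₀ (by positivity)]
      linarith
    exact t.trans (mul_le_mul_of_nonneg_left hRA hη)
  have hRW : retProb d (A ∪ O) x ≤ retProb d A x * (1 + η) := by linarith
  have hRWp : 0 < retProb d (A ∪ O) x := by linarith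
  unfold transP
  rw [hitA, le_div_iff₀ hRWp]
  refine le_trans ?_ hhitW
  have hq : 0 ≤ (1 - 2 * η) * (mw d A y * G / retProb d A x) :=
    mul_nonneg hgt.le (by positivity)
  refine (mul_le_mul_of_nonneg_left hRW hq).trans ?_
  have e : (1 - 2 * η) * (mw d A y * G / retProb d A x) * (retProb d A x * (1 + η)) =
      (mw d A y * G) * ((1 - 2 * η) * (1 + η)) := by field_simp
  rw [e, ← mul_assoc (mw d A y) G (1 - η)]
  apply mul_le_mul_of_nonneg_left _ (by positivity)
  nlinarith

lemma numeric (d : ℕ) (hd : 5 ≤ d) : ∃ C : ℝ, 0 < C ∧ ∀ (b s ρ D : ℝ), 1 < b → 1 ≤ s → s ≤ ρ →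
    1 ≤ D → D ≤ b * Real.log ρ → b ^ (d - 2) * s ^ ((2.1 : ℝ) - d) ≤ 1 →
    ρ ^ (-((d : ℝ) - 2 - 0.02)) * D ^ ((d : ℝ) - 2 + 0.02) ≤
      C * (b ^ (d - 2) * s ^ ((2.1 : ℝ) - d)) := by
  have hd5 : (5 : ℝ) ≤ d := by exact_mod_cast hd
  set θ : ℝ := 0.05 / d with hθ
  have hθp : 0 < θ := by positivity
  refine ⟨(1 / θ) ^ ((d : ℝ) - 2 + 0.02), by positivity, fun b s ρ D hb hs hsρ hD hDb hsm => ?_⟩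
  have hρ1 : 1 ≤ ρ := hs.trans hsρ
  have hρ0 : 0 < ρ := by linarith
  have hs0 : 0 < s := by linarith
  have hb0 : 0 < b := by linarith
  have hbpow : b ^ (d - 2) = b ^ ((d : ℝ) - 2) := by
    rw [← Real.rpow_natCast]; congr 1; push_cast [Nat.cast_sub (by omega : 2 ≤ d)]; ring
  rw [hbpow] at hsm ⊢
  have hbs : b ≤ s := by
    have h1 : b ^ ((d : ℝ) - 2) ≤ s ^ ((d : ℝ) - 2) := by
      have h2 : b ^ ((d : ℝ) - 2) ≤ s ^ ((d : ℝ) - 2.1) := by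
        have h3 : s ^ ((2.1 : ℝ) - d) = (s ^ ((d : ℝ) - 2.1))⁻¹ := by
          rw [← Real.rpow_neg hs0.le]; congr 1; ring
        rw [h3, ← div_eq_mul_inv, div_le_one (by positivity)] at hsm
        exact hsm
      exact h2.trans (Real.rpow_le_rpow_of_exponent_le hs (by linarith))
    exact (Real.rpow_le_rpow_iff hb0.le hs0.le (by linarith)).1 h1
  have hlog0 : 0 ≤ Real.log ρ := Real.log_nonneg hρ1
  have hlog : Real.log ρ ≤ ρ ^ θ / θ := Real.log_le_rpow_div hρ0.le hθp
  have hDle : D ≤ b * (ρ ^ θ * (1 / θ)) := by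
    refine hDb.trans (mul_le_mul_of_nonneg_left ?_ hb0.le)
    rw [mul_one_div]; exact hlog
  set p : ℝ := (d : ℝ) - 2 + 0.02 with hp
  have hpp : 0 < p := by rw [hp]; linarith
  have h1 : D ^ p ≤ b ^ p * ((ρ ^ θ) ^ p * (1 / θ) ^ p) := by
    rw [← Real.mul_rpow (by positivity) (by positivity), ← Real.mul_rpow (by positivity) (by positivity)]
    exact Real.rpow_le_rpow (by linarith) hDle hpp.le
  have h2 : b ^ p ≤ b ^ ((d : ℝ) - 2) * ρ ^ (0.02 : ℝ) := by
    rw [hp, Real.rpow_add hb0]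
    exact mul_le_mul_of_nonneg_left (Real.rpow_le_rpow hb0.le (hbs.trans hsρ) (by norm_num))
      (by positivity)
  have h3 : (ρ ^ θ) ^ p = ρ ^ (θ * p) := by rw [← Real.rpow_mul hρ0.le]
  have hθp2 : θ * p ≤ 0.05 := by
    rw [hθ, div_mul_eq_mul_div, div_le_iff₀ (by linarith)]
    nlinarith
  have h4 : D ^ p ≤ (b ^ ((d : ℝ) - 2) * ρ ^ (0.02 : ℝ)) * (ρ ^ (θ * p) * (1 / θ) ^ p) := by
    rw [h3] at h1
    exact h1.trans (mul_le_mul_of_nonneg_right h2 (by positivity))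
  have h5 : ρ ^ (-((d : ℝ) - 2 - 0.02)) * (ρ ^ (0.02 : ℝ) * ρ ^ (θ * p)) ≤ s ^ ((2.1 : ℝ) - d) := by
    rw [← Real.rpow_add hρ0, ← Real.rpow_add hρ0]
    calc _ ≤ ρ ^ ((2.1 : ℝ) - d) := Real.rpow_le_rpow_of_exponent_le hρ1 (by linarith)
      _ ≤ _ := Real.rpow_le_rpow_of_nonpos hs0 hsρ (by linarith)
  calc _ ≤ ρ ^ (-((d : ℝ) - 2 - 0.02)) *
        ((b ^ ((d : ℝ) - 2) * ρ ^ (0.02 : ℝ)) * (ρ ^ (θ * p) * (1 / θ) ^ p)) :=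
        mul_le_mul_of_nonneg_left h4 (by positivity)
    _ = ((1 / θ) ^ p * b ^ ((d : ℝ) - 2)) *
        (ρ ^ (-((d : ℝ) - 2 - 0.02)) * (ρ ^ (0.02 : ℝ) * ρ ^ (θ * p))) := by ring
    _ ≤ ((1 / θ) ^ p * b ^ ((d : ℝ) - 2)) * s ^ ((2.1 : ℝ) - d) :=
        mul_le_mul_of_nonneg_left h5 (by positivity)
    _ = _ := by ring

/-! ### Part 7: clusters and assembly -/

lemma latAdj_ev (d : ℕ) (x y : Pt d) (h : latAdj d x y) :
    ∃ i, y = x + ev d i ∨ y = x - ev d i := by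
  unfold latAdj at h
  obtain ⟨i, hi⟩ : ∃ i, (x i - y i).natAbs ≠ 0 := by
    by_contra hcon
    push Not at hcon
    simp [hcon] at h
  rw [← Finset.add_sum_erase _ _ (Finset.mem_univ i)] at h
  have h1 : (x i - y i).natAbs = 1 := by omega
  have h2 : ∑ j ∈ Finset.univ.erase i, (x j - y j).natAbs = 0 := by omega
  have h3 : ∀ j, j ≠ i → x j = y j := by
    intro j hj
    have := (Finset.sum_eq_zero_iff.1 h2) j (Finset.mem_erase.2 ⟨hj, Finset.mem_univ j⟩)
    omega
  refine ⟨i, ?_⟩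
  rcases Int.natAbs_eq (x i - y i) with h4 | h4
  · right
    funext j
    by_cases hj : j = i
    · subst hj; simp [ev]; omega
    · simp [ev, hj, h3 j hj]
  · left
    funext j
    by_cases hj : j = i
    · subst hj; simp [ev]; omega
    · simp [ev, hj, h3 j hj]

lemma mw_adj (d : ℕ) (hd : 0 < d) (A : Set (Pt d)) (y w : Pt d) (hw : w ∈ A) (i : Fin d)
    (h : w = y + ev d i ∨ w = y - ev d i) : 1 / (2 * d : ℝ) ≤ mw d A y := by
  classical
  have hd0 : (0 : ℝ) < d := by exact_mod_cast hd
  unfold mw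
  apply div_le_div_of_nonneg_right _ (by positivity)
  have hnn : ∀ v : Pt d, (0 : ℝ) ≤ (if v ∈ A then (1 : ℝ) else 0) := by
    intro v; split_ifs <;> norm_num
  refine le_trans ?_ (Finset.single_le_sum (f := fun i => ((if y + ev d i ∈ A then (1 : ℝ) else 0) +
    (if y - ev d i ∈ A then (1 : ℝ) else 0)))
    (fun j _ => add_nonneg (hnn _) (hnn _)) (Finset.mem_univ i))
  rcases h with h | h
  · have := hnn (y - ev d i)
    simp only [← h, hw, if_true]; linarith
  · have := hnn (y + ev d i)
    simp only [← h, hw, if_true]; linarith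

lemma one_le_nrm (d : ℕ) (v : Pt d) (hv : v ≠ 0) : 1 ≤ nrm d v := by
  obtain ⟨i, hi⟩ : ∃ i, v i ≠ 0 := by
    by_contra hcon
    push Not at hcon
    exact hv (funext hcon)
  have h1 := sq_le_N d v i
  have h2 : (1 : ℝ) ≤ (v i : ℝ) ^ 2 := by
    have : (1 : ℤ) ≤ (v i) ^ 2 := by
      have := sq_pos_of_ne_zero hi
      omega
    exact_mod_cast this
  exact Real.one_le_sqrt.2 (h2.trans h1)

lemma setDist_le (d : ℕ) (A B : Finset (Pt d)) (p q : Pt d) (hp : p ∈ A) (hq : q ∈ B) :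
    setDist d A B ≤ dist0 d p q := by
  refine csInf_le ⟨0, ?_⟩ ⟨p, hp, q, hq, rfl⟩
  rintro r ⟨x, _, y, _, rfl⟩
  exact Real.sqrt_nonneg _

lemma le_diam0 (d : ℕ) (A : Finset (Pt d)) (p q : Pt d) (hp : p ∈ A) (hq : q ∈ A) :
    dist0 d p q ≤ diam0 d A := by
  refine le_csSup ?_ ⟨p, hp, q, hq, rfl⟩
  have : {r : ℝ | ∃ x ∈ A, ∃ y ∈ A, r = dist0 d x y} =
      (fun z : Pt d × Pt d => dist0 d z.1 z.2) '' ↑(A ×ˢ A) := by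
    ext r
    constructor
    · rintro ⟨x, hx, y, hy, rfl⟩
      exact ⟨(x, y), by simp [hx, hy], rfl⟩
    · rintro ⟨⟨x, y⟩, hxy, rfl⟩
      simp at hxy
      exact ⟨x, hxy.1, y, hxy.2, rfl⟩
  rw [this]
  exact ((A ×ˢ A).finite_toSet.image _).bddAbove

lemma mem_others (d : ℕ) {k : ℕ} (C : Fin k → Finset (Pt d)) (i : Fin k) (z : Pt d) :
    z ∈ others d C i ↔ ∃ j, j ≠ i ∧ z ∈ C j := by
  unfold others
  simp only [Finset.mem_biUnion, Finset.mem_univ, true_and]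
  constructor
  · rintro ⟨j, hj⟩
    by_cases h : j = i
    · simp [h] at hj
    · exact ⟨j, h, by simpa [h] using hj⟩
  · rintro ⟨j, h, hj⟩
    exact ⟨j, by simpa [h] using hj⟩

lemma one_le_setDist (d : ℕ) {k : ℕ} (hk : 2 ≤ k) (C : Fin k → Finset (Pt d))
    (hne : ∀ i, (C i).Nonempty) (hdis : ∀ i j, i ≠ j → Disjoint (C i) (C j)) (i : Fin k) :
    1 ≤ setDist d (C i) (others d C i) := by
  have : Nontrivial (Fin k) := Fin.nontrivial_iff_two_le.2 hk
  obtain ⟨j, hj⟩ := exists_ne i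
  obtain ⟨p, hp⟩ := hne i
  obtain ⟨q, hq⟩ := hne j
  refine le_csInf ⟨_, p, hp, q, (mem_others d C i q).2 ⟨j, hj, hq⟩, rfl⟩ ?_
  rintro r ⟨x, hx, y, hy, rfl⟩
  obtain ⟨l, hl, hyl⟩ := (mem_others d C i y).1 hy
  rw [dist0_eq]
  apply one_le_nrm
  intro h
  rw [sub_eq_zero] at h
  subst h
  exact Finset.disjoint_left.1 (hdis l i hl) hyl hx

/-- constants depending on the dimension only -/
lemma core (d : ℕ) (hd : 5 ≤ d) : ∃ c : ℝ, 0 < c ∧ ∀ (A O : Finset (Pt d)) (x y : Pt d) (n D ρ : ℝ),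
    A.card ≤ 2 → (O.card : ℝ) ≤ n → x ∉ A → y ∉ A → 1 ≤ D → 0 < ρ →
    (∀ z ∈ A, nrm d (z - x) ≤ D) → (∃ w ∈ A, latAdj d y w) → (∀ z ∈ O, ρ ≤ nrm d (x - z)) →
    (1 - c * n * (ρ ^ (-((d : ℝ) - 2 - 0.02)) * D ^ ((d : ℝ) - 2 + 0.02))) *
      transP d (↑A) x y ≤ transP d (↑A ∪ ↑O) x y := by
  have hd5 : (5 : ℝ) ≤ d := by exact_mod_cast hd
  have hβ : 0 < ((d : ℝ) - 2 - 0.02) / 2 := by linarith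
  have hβ' : 0 < ((d : ℝ) - 2 + 0.02) / 2 := by linarith
  set β : ℝ := ((d : ℝ) - 2 - 0.02) / 2 with hβe
  set β' : ℝ := ((d : ℝ) - 2 + 0.02) / 2 with hβe'
  obtain ⟨a, ha, hsup⟩ := super_uu d (by omega) β hβ (by rw [hβe]; linarith)
  have hs := hsup a le_rfl
  have ha0 : 0 < a := by linarith
  have hu0 := uu_zero_pos d a β ha0
  obtain ⟨Kg, hKg, hG⟩ := green_upper d (by omega) a β ha hβ hs
  obtain ⟨c, hc, hlb⟩ := main_lb d (by omega) a β β' Kg ha hβ hβ' (by rw [hβe, hβe']; linarith)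
    (by rw [hβe']; linarith) hs hKg hG
  have hM0 : 0 < Kg * uu d a β 0 := by positivity
  refine ⟨2 * ((Kg * uu d a β 0 + 2 * d) / (uu d a β 0 * c)), by positivity,
    fun A O x y n D ρ hA hO hxA hyA hD hρ hAD hyad hOρ => ?_⟩
  obtain ⟨w, hw, hadj⟩ := hyad
  obtain ⟨i, hi⟩ := latAdj_ev d y w hadj
  have hyw : nrm d (y - w) = 1 := by
    rcases hi with h | h
    · have : y - w = -ev d i := by rw [h]; abel
      rw [this, nrm_neg, nrm_ev]
    · have : y - w = ev d i := by rw [h]; abel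
      rw [this, nrm_ev]
  have hyx : nrm d (y - x) ≤ D + 1 := by
    have := nrm_tri d y w x
    linarith [hAD w hw]
  have hGlow := hlb A x y D hA hxA hyA hD hAD hyx
  have hn : 0 ≤ n := (Nat.cast_nonneg _).trans hO
  have hD0 : 0 < D := by linarith
  have hh := hpot_le d a β (ρ ^ 2) ha0 hβ (by positivity) O n hO x (fun z hz => by
    have := hOρ z hz
    rw [← nrm_sq]
    nlinarith)
  have hρe : (ρ ^ 2) ^ (-β) = ρ ^ (-((d : ℝ) - 2 - 0.02)) := by
    rw [← Real.rpow_natCast ρ 2, ← Real.rpow_mul hρ.le]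
    congr 1
    rw [hβe]; push_cast; ring
  have hDe : D ^ (-(2 * β')) = (D ^ ((d : ℝ) - 2 + 0.02))⁻¹ := by
    rw [← Real.rpow_neg hD0.le]
    congr 1
    rw [hβe']; ring
  rw [hρe] at hh
  rw [hDe] at hGlow
  set P := ρ ^ (-((d : ℝ) - 2 - 0.02)) with hP
  set Q := D ^ ((d : ℝ) - 2 + 0.02) with hQ
  have hPp : 0 < P := by positivity
  have hQp : 0 < Q := by positivity
  set G := pot d (↑A) (Pi.single y 1) x with hGd
  set η : ℝ := (Kg * uu d a β 0 + 2 * d) / (uu d a β 0 * c) * n * (P * Q) with hη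
  have hη0 : 0 ≤ η := by positivity
  have hηG : (Kg * uu d a β 0 + 2 * d) * (n * (P / uu d a β 0)) ≤ η * G := by
    refine le_trans (le_of_eq ?_) (mul_le_mul_of_nonneg_left hGlow hη0)
    rw [hη]
    field_simp
  have hh0 := hpot_nonneg d a β ha0.le O x
  have hX : 0 ≤ n * (P / uu d a β 0) := by positivity
  have key := trans_cmp d (by omega) (↑A) (↑O) _ (hpot d a β O) x y
    (Sup_anti d (Set.empty_subset _) _ _ (hG y)) (hpot_nonneg d a β ha0.le O)
    (fun v hv => hpot_ge_one d a β ha0 O v (by simpa using hv))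
    (hpot_super d a β ha0.le hs O) (Kg * uu d a β 0) η hM0.le
    (fun v => (pot_le d _ _ _ (Sup_anti d (Set.empty_subset _) _ _ (hG y)) v).trans
      (mul_le_mul_of_nonneg_left (by
        unfold uu
        have h0 : N d 0 = 0 := by simp [N]
        have := N_nonneg d (v - y)
        exact Real.rpow_le_rpow_of_nonpos (by linarith) (by linarith) (by linarith)) hKg.le))
    hη0 (mw_adj d (by omega) (↑A) y w (by simpa using hw) i hi)
    (lt_of_lt_of_le (by positivity) hGlow)
    (by nlinarith) (by nlinarith)
  have e : 2 * ((Kg * uu d a β 0 + 2 * d) / (uu d a β 0 * c)) * n * (P * Q) = 2 * η := by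
    rw [hη]; ring
  rw [e]
  exact key

/-- **Transport comparison.** For `d ≥ 5` there is `c = c(d) > 0` such that for any
clustering `C` of an `n`-element configuration in `ℤ^d` (with at least two clusters, each
with at most 3 elements, `sep(C)^{0.1} ≥ (log sep(C))^{d−2}`, and
`diam(C^j) ≤ b log dist(C^j, C^{≠j})` for all `j`), any `x ∈ C^i` and any
`y ∈ ∂(C^i∖{x})` with `p_{π(C)}(x,y) > 0`:
`P_x(S_{τ−1} = y ∣ τ < ∞) ≥ (1 − c n b^{d−2} sep(C)^{2.1−d}) P_x(S_{τ'−1} = y ∣ τ' < ∞)`. -/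
theorem transport_comparison (d : ℕ) (hd : 5 ≤ d) :
    ∃ c : ℝ, 0 < c ∧
      ∀ (n : ℕ) (b : ℝ), 1 < b →
        ∀ C : ClusteringS d, IsClusteringConf d n C → 2 ≤ C.1 →
          (∀ i, (C.2 i).card ≤ 3) →
          (Real.log (sep d C.2)) ^ (d - 2) ≤ sep d C.2 ^ ((0.1 : ℝ)) →
          (∀ j, diam0 d (C.2 j) ≤ b * Real.log (setDist d (C.2 j) (others d C.2 j))) →
          ∀ (i : Fin C.1) (x y : Pt d), x ∈ C.2 i →
            y ∈ bdry d ((↑(C.2 i) : Set (Pt d)) \ {x}) →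
            0 < pHAT d (confOf d C) x y →
              (1 - c * (n : ℝ) * b ^ (d - 2) * sep d C.2 ^ ((2.1 : ℝ) - (d : ℝ))) *
                  transP d ((↑(C.2 i) : Set (Pt d)) \ {x}) x y ≤
                transP d ((↑(confOf d C) : Set (Pt d)) \ {x}) x y := by
  classical
  obtain ⟨c0, hc0, hcore⟩ := core d hd
  obtain ⟨C1, hC1, hnum⟩ := numeric d hd
  refine ⟨max 1 (c0 * C1), lt_of_lt_of_le one_pos (le_max_left _ _), ?_⟩
  rintro n b hb ⟨k, C⟩ ⟨hne, hdis, hcard⟩ hk hle3 _ hdiam i x y hx hy _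
  simp only at hne hdis hk hle3 hdiam hx hy i ⊢
  set c := max 1 (c0 * C1) with hc
  have hc1 : 1 ≤ c := le_max_left _ _
  have hc2 : c0 * C1 ≤ c := le_max_right _ _
  set s := sep d C with hs
  have hk0 : Nonempty (Fin k) := ⟨i⟩
  have hs1 : 1 ≤ s := le_ciInf fun j => one_le_setDist d hk C hne hdis j
  set ρ := setDist d (C i) (others d C i) with hρ
  have hsρ : s ≤ ρ := ciInf_le (Set.finite_range _).bddBelow i
  have hb0 : 0 < b := by linarith
  have hs0 : 0 < s := by linarith
  have hTA := transP_nonneg d ((↑(C i) : Set (Pt d)) \ {x}) x y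
  set E := b ^ (d - 2) * s ^ ((2.1 : ℝ) - d) with hE
  have hE0 : 0 < E := by positivity
  have e1 : c * (n : ℝ) * b ^ (d - 2) * s ^ ((2.1 : ℝ) - d) = c * n * E := by rw [hE]; ring
  rw [e1]
  rcases le_or_gt (1 - c * n * E) 0 with hneg | hpos
  · exact (mul_nonpos_of_nonpos_of_nonneg hneg hTA).trans (transP_nonneg d _ x y)
  have hxconf : x ∈ confOf d ⟨k, C⟩ := Finset.mem_biUnion.2 ⟨i, Finset.mem_univ i, hx⟩
  have hn1 : (1 : ℝ) ≤ n := by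
    have : 0 < n := by rw [← hcard]; exact Finset.card_pos.2 ⟨x, hxconf⟩
    exact_mod_cast this
  have hE1 : E ≤ 1 := by nlinarith [mul_le_mul hc1 hn1 zero_le_one (by linarith : (0 : ℝ) ≤ c)]
  obtain ⟨hyA, w, hwA, hadj⟩ := hy
  have hAeq : (↑(C i) : Set (Pt d)) \ {x} = ↑((C i).erase x) := by simp
  have hxo : x ∉ others d C i := by
    intro h
    obtain ⟨j, hj, hxj⟩ := (mem_others d C i x).1 h
    exact Finset.disjoint_left.1 (hdis j i hj) hxj hx
  have hWeq : (↑(confOf d ⟨k, C⟩) : Set (Pt d)) \ {x} = ↑((C i).erase x) ∪ ↑(others d C i) := by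
    ext z
    simp only [Set.mem_sdiff, Finset.mem_coe, Set.mem_singleton_iff, Set.mem_union,
      Finset.mem_erase, mem_others, confOf, Finset.mem_biUnion, Finset.mem_univ, true_and]
    constructor
    · rintro ⟨⟨j, hj⟩, hzx⟩
      by_cases h : j = i
      · subst h; exact Or.inl ⟨hzx, hj⟩
      · exact Or.inr ⟨j, h, hj⟩
    · rintro (⟨hzx, hz⟩ | ⟨j, hj, hz⟩)
      · exact ⟨⟨i, hz⟩, hzx⟩
      · refine ⟨⟨j, hz⟩, ?_⟩
        rintro rfl
        exact hxo ((mem_others d C i z).2 ⟨j, hj, hz⟩)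
  rw [hAeq] at hyA hwA hTA ⊢
  rw [hWeq]
  have hwA : w ∈ (C i).erase x := Finset.mem_coe.1 hwA
  have hAD : ∀ z ∈ (C i).erase x, nrm d (z - x) ≤ diam0 d (C i) := by
    intro z hz
    rw [← dist0_eq]
    exact le_diam0 d (C i) z x (Finset.mem_of_mem_erase hz) hx
  have hD1 : 1 ≤ diam0 d (C i) :=
    (one_le_nrm d (w - x) (sub_ne_zero.2 (Finset.ne_of_mem_erase hwA))).trans (hAD w hwA)
  have hmain := hcore ((C i).erase x) (others d C i) x y n (diam0 d (C i)) ρ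
    (by rw [Finset.card_erase_of_mem hx]; have := hle3 i; omega)
    (by
      have : (others d C i).card ≤ n := by
        rw [← hcard]
        apply Finset.card_le_card
        intro z hz
        obtain ⟨j, _, hzj⟩ := (mem_others d C i z).1 hz
        exact Finset.mem_biUnion.2 ⟨j, Finset.mem_univ j, hzj⟩
      exact_mod_cast this)
    (by simp) (fun h => hyA (Finset.mem_coe.2 h)) hD1 (by linarith) hAD ⟨w, hwA, hadj⟩
    (fun z hz => by rw [← dist0_eq]; exact setDist_le d _ _ x z hx hz)
  refine le_trans (mul_le_mul_of_nonneg_right ?_ hTA) hmain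
  have hnn := hnum b s ρ (diam0 d (C i)) hb hs1 hsρ hD1 (hdiam i) hE1
  have h1 : c0 * n * (ρ ^ (-((d : ℝ) - 2 - 0.02)) * diam0 d (C i) ^ ((d : ℝ) - 2 + 0.02)) ≤
      c * n * E := by
    calc _ ≤ c0 * n * (C1 * E) := mul_le_mul_of_nonneg_left hnn (by positivity)
      _ = (c0 * C1) * (n * E) := by ring
      _ ≤ c * (n * E) := mul_le_mul_of_nonneg_right hc2 (by positivity)
      _ = _ := by ring
  linarith

end HATFormal
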